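/- For all real numbers η > 1 and τ > 1 there exists a constant C > 0, depending only on n, p, α, η, τ, C₁ and C₂, with the following property: if u is a nonnegative C¹ solution of div A(x,Du) + b(x)|Du|^α ≥ q(x)g(u) in ℝⁿ and 0 < r₁ < r₂ are real numbers with τ^{1/2}·r₁ ≤ r₂ and 0 < M(r₂;u) ≤ η^{1/2}·M(r₁;u), then at least one of the following two inequalities holds: (i) ∫_{M(r₁;u)}^{M(r₂;u)} g_η(t)^{−1/α} dt ≥ C·∫_{r₁}^{r₂} (ξ·f_τ(ξ))^{1/(p−1)} dξ; (ii) ∫_{M(r₁;u)}^{M(r₂;u)} g_η(t)^{−1/(p−1)} dt ≥ C·∫_{r₁}^{r₂} (ξ·f_τ(ξ))^{1/(p−1)} dξ. -/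

import Mathlib

open MeasureTheory Metric Set Filter
open scoped RealInnerProductSpace ENNReal

noncomputable section

abbrev Euc (n : ℕ) := EuclideanSpace ℝ (Fin n)

/-- Weak solution of `div A(x,Dv) + b(x)|Dv|^α ≥ a(x)` on an open set `U`:
for every nonnegative test function `φ ∈ C₀^∞(U)`,
`-∫ A(x,Dv)·Dφ + ∫ b |Dv|^α φ ≥ ∫ a φ`. -/
def IsWeakSol {n : ℕ} (A : Euc n → Euc n → Euc n) (b : Euc n → ℝ) (α : ℝ)
    (a : Euc n → ℝ) (U : Set (Euc n)) (v : Euc n → ℝ) : Prop :=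
  ∀ φ : Euc n → ℝ, ContDiff ℝ (⊤ : ℕ∞) φ → HasCompactSupport φ → tsupport φ ⊆ U →
    (∀ x, 0 ≤ φ x) →
    (∫ x in U, a x * φ x) ≤
      (-(∫ x in U, ⟪A x (gradient v x), gradient φ x⟫)) +
        ∫ x in U, b x * ‖gradient v x‖ ^ α * φ x

/-- Structural conditions on `A`: measurability, coercivity and growth. -/
def StructCond {n : ℕ} (A : Euc n → Euc n → Euc n) (p C₁ C₂ : ℝ) : Prop :=
  Measurable (Function.uncurry A) ∧
    ∀ x ζ : Euc n, C₁ * ‖ζ‖ ^ p ≤ ⟪ζ, A x ζ⟫ ∧ ‖A x ζ‖ ≤ C₂ * ‖ζ‖ ^ (p - 1)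

/-- Locally bounded function on `ℝⁿ`. -/
def LocBdd {n : ℕ} (b : Euc n → ℝ) : Prop :=
  ∀ K : Set (Euc n), IsCompact K → ∃ C, ∀ x ∈ K, b x ≤ C

/-- `M(r; u) = max_{|x| = r} u x`. -/
def sphMax {n : ℕ} (u : Euc n → ℝ) (r : ℝ) : ℝ := sSup (u '' Metric.sphere (0 : Euc n) r)

/-- `g_θ(t) = inf_{s ∈ (t/θ, θ t)} g s`. -/
def ginf (g : ℝ → ℝ) (θ t : ℝ) : ℝ := sInf (g '' Set.Ioo (t / θ) (θ * t))

/-- The open annulus `{x : r₁ < |x| < r₂}`. -/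
def Ann (n : ℕ) (r₁ r₂ : ℝ) : Set (Euc n) := {x : Euc n | r₁ < ‖x‖ ∧ ‖x‖ < r₂}

/-- `q_σ(r) = ess inf_{r/σ < |x| < σ r} q x`. -/
def qinf {n : ℕ} (q : Euc n → ℝ) (σ r : ℝ) : ℝ :=
  essInf q (volume.restrict (Ann n (r / σ) (σ * r)))

/-- `f_σ(r) = q_σ(r) / (1 + r q_σ(r)^{(α-p+1)/α} ess sup_{r/σ<|x|<σr} b^{(p-1)/α})`. -/
def fdef {n : ℕ} (q b : Euc n → ℝ) (p α σ r : ℝ) : ℝ :=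
  qinf q σ r /
    (1 + r * qinf q σ r ^ ((α - p + 1) / α) *
      essSup (fun x => b x ^ ((p - 1) / α)) (volume.restrict (Ann n (r / σ) (σ * r))))

/-! Testing `div V + c ≥ 0` with `(u⁺)ˢ ηᵖ` gives a Caccioppoli inequality, provided `c` can be
absorbed. If moreover `c ≤ -a` on the ball `B(x₀, R)` up to an absorbable part, the resulting gain
`a ∫ (u⁺)ˢ ηᵖ`, combined with the Sobolev embedding of `W^{1,1}`, makes the averages of a power of
`u⁺` over the balls `B(x₀, R / 4ʲ)` decay to zero as soon as `max u` is small compared with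
`R (a R)^(1/(p-1))`. Hence `u(x₀) > 0` forces `max u` to be at least a multiple of this scale.

The drift `b |Du|^α` is absorbed partly in the coercive energy and partly in the source, as long as
`R a^((α-p+1)/α) b^((p-1)/α)` is bounded. Apply the estimate to `u - k` at the maximum point of a
sphere, with `k` just below the maximum: since by the maximum principle `M(r)` bounds `u` on the
whole ball of radius `r`, this shows that `M` increases by a fixed multiple of `δ (a δ)^(1/(p-1))`
over every step `δ` short enough. Longer intervals have to be crossed in several steps, which is
what produces the denominator of `f_σ`.

Summing over a geometric partition of `[r₁, r₂]` bounds `M(r₂) - M(r₁)` below by the integral of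
`(ξ f_τ(ξ))^(1/(p-1))` times `min (γ^(1/α)) (γ^(1/(p-1)))`, where `γ` is a lower bound for `g` on
the values of `u` involved. Since `M` varies by less than a factor `η`, one can take for `γ` the
minimum of `g` over an interval slightly larger than `[M(r₁), M(r₂)]`, which bounds `g_η` from above
on `[M(r₁), M(r₂)]`; the two alternatives correspond to the two terms of the minimum. -/

section Powers

open Real

variable {s : ℝ}

lemma hasDerivAt_posPart_rpow (hs : 1 < s) (t : ℝ) :
    HasDerivAt (fun t : ℝ ↦ t⁺ ^ s) (s * t⁺ ^ (s - 1)) t := by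
  have hright : HasDerivWithinAt (fun t : ℝ ↦ t⁺ ^ s) (s * t⁺ ^ (s - 1)) (Ici 0) t := by
    by_cases ht : 0 ≤ t
    · rw [posPart_of_nonneg ht]
      refine (hasDerivAt_rpow_const (Or.inr hs.le)).hasDerivWithinAt.congr (fun y hy ↦ ?_) ?_
      · rw [posPart_of_nonneg hy]
      · rw [posPart_of_nonneg ht]
    · exact HasFDerivWithinAt.of_notMem_closure (by simpa using ht)
  have hleft : HasDerivWithinAt (fun t : ℝ ↦ t⁺ ^ s) (s * t⁺ ^ (s - 1)) (Iic 0) t := by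
    by_cases ht : t ≤ 0
    · rw [posPart_of_nonpos ht, zero_rpow (by linarith), mul_zero]
      refine (hasDerivWithinAt_const t (Iic 0) (0 : ℝ)).congr (fun y hy ↦ ?_) ?_
      · rw [posPart_of_nonpos hy, zero_rpow (by linarith)]
      · rw [posPart_of_nonpos ht, zero_rpow (by linarith)]
    · exact HasFDerivWithinAt.of_notMem_closure (by simpa using ht)
  simpa using hright.union hleft

lemma contDiff_posPart_rpow (hs : 1 < s) : ContDiff ℝ 1 fun t : ℝ ↦ t⁺ ^ s := by
  rw [contDiff_one_iff_deriv, funext fun t ↦ (hasDerivAt_posPart_rpow hs t).deriv]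
  refine ⟨fun t ↦ (hasDerivAt_posPart_rpow hs t).differentiableAt, continuous_const.mul ?_⟩
  exact (continuous_id.sup continuous_const).rpow_const fun _ ↦ Or.inr (by linarith)

lemma continuous_posPart_rpow {X : Type*} [TopologicalSpace X] {u : X → ℝ} (hu : Continuous u)
    (hs : 0 ≤ s) : Continuous fun x ↦ (u x)⁺ ^ s :=
  (hu.sup continuous_const).rpow_const fun _ ↦ Or.inr hs

lemma fderiv_posPart_rpow_mul {E : Type*} [NormedAddCommGroup E] [NormedSpace ℝ E]
    {u χ : E → ℝ} (hs : 1 < s) {x : E} (hu : DifferentiableAt ℝ u x)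
    (hχ : DifferentiableAt ℝ χ x) :
    fderiv ℝ (fun x ↦ (u x)⁺ ^ s * χ x) x =
      (u x)⁺ ^ s • fderiv ℝ χ x + χ x • (s * (u x)⁺ ^ (s - 1)) • fderiv ℝ u x := by
  have hpow : HasFDerivAt (fun x ↦ (u x)⁺ ^ s) _ x :=
    (hasDerivAt_posPart_rpow hs (u x)).comp_hasFDerivAt x hu.hasFDerivAt
  exact (hpow.mul hχ.hasFDerivAt).fderiv

lemma norm_fderiv_rpow {E : Type*} [NormedAddCommGroup E] [NormedSpace ℝ E] {η : E → ℝ}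
    (hs : 1 ≤ s) {x : E} (hη : DifferentiableAt ℝ η x) (hη0 : 0 ≤ η x) :
    ‖fderiv ℝ (fun x ↦ η x ^ s) x‖ = s * η x ^ (s - 1) * ‖fderiv ℝ η x‖ := by
  rw [(hη.hasFDerivAt.rpow_const (Or.inr hs)).fderiv, norm_smul, norm_of_nonneg]
  positivity

lemma hasCompactSupport_rpow {X : Type*} [TopologicalSpace X] {η : X → ℝ} (hs : s ≠ 0)
    (hη : HasCompactSupport η) : HasCompactSupport fun x ↦ η x ^ s :=
  hη.comp_left (g := fun t ↦ t ^ s) (zero_rpow hs)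

end Powers

section ScalarInequalities

lemma rpow_eq_rpow_sub_one_mul {x s : ℝ} (hx : 0 ≤ x) (hs : s ≠ 0) : x ^ s = x ^ (s - 1) * x := by
  rw [← Real.rpow_add_one' hx (by simpa using hs), sub_add_cancel]

lemma rpow_sub_one_mul_le_add {p ε x y : ℝ} (hp : 1 ≤ p) (hε : 0 < ε) (hx : 0 ≤ x) (hy : 0 ≤ y) :
    x ^ (p - 1) * y ≤ ε * x ^ p + ε⁻¹ ^ (p - 1) * y ^ p := by
  have hp0 : p ≠ 0 := by linarith
  rcases le_total y (ε * x) with h | h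
  · calc x ^ (p - 1) * y ≤ x ^ (p - 1) * (ε * x) := by gcongr
      _ = ε * x ^ p := by rw [rpow_eq_rpow_sub_one_mul hx hp0]; ring
      _ ≤ _ := le_add_of_nonneg_right (by positivity)
  · calc x ^ (p - 1) * y ≤ (ε⁻¹ * y) ^ (p - 1) * y := by
          gcongr
          rwa [inv_mul_eq_div, le_div_iff₀' hε]
      _ = ε⁻¹ ^ (p - 1) * y ^ p := by
          rw [Real.mul_rpow (by positivity) hy, rpow_eq_rpow_sub_one_mul hy hp0, mul_assoc]
      _ ≤ _ := le_add_of_nonneg_left (by positivity)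

end ScalarInequalities

section WeakDivergence

open ContinuousLinearMap

open scoped Convolution

variable {E : Type*} [NormedAddCommGroup E] [NormedSpace ℝ E] [FiniteDimensional ℝ E]
  [MeasurableSpace E] [BorelSpace E] {μ : Measure E}

lemma locallyIntegrable_of_bddOn_compact [IsFiniteMeasureOnCompacts μ] {F : Type*}
    [NormedAddCommGroup F] {f : E → F} (hf : AEStronglyMeasurable f μ)
    (hbdd : ∀ K, IsCompact K → ∃ C, ∀ x ∈ K, ‖f x‖ ≤ C) : LocallyIntegrable f μ := by
  rw [locallyIntegrable_iff]
  intro K hK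
  obtain ⟨C, hC⟩ := hbdd K hK
  exact Measure.integrableOn_of_bounded hK.measure_lt_top.ne hf
    (ae_restrict_of_forall_mem hK.measurableSet hC)

lemma integrable_clm_apply_of_hasCompactSupport {F G : Type*} [NormedAddCommGroup F]
    [NormedSpace ℝ F] [NormedAddCommGroup G] [NormedSpace ℝ G] {L : E → F →L[ℝ] G} {V : E → F}
    (hV : LocallyIntegrable V μ) (hL : Continuous L) (hLc : HasCompactSupport L) :
    Integrable (fun x ↦ L x (V x)) μ := by
  have hVn : LocallyIntegrable (fun x ↦ ‖V x‖) μ :=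
    hV.mono hV.aestronglyMeasurable.norm (Eventually.of_forall fun x ↦ (norm_norm _).le)
  have hbound : Integrable (fun x ↦ ‖L x‖ • ‖V x‖) μ :=
    hVn.integrable_smul_left_of_hasCompactSupport hL.norm hLc.norm
  refine hbound.mono' ?_ (Eventually.of_forall fun x ↦ (L x).le_opNorm _)
  exact isBoundedBilinearMap_apply.continuous.comp_aestronglyMeasurable
    (hL.aestronglyMeasurable.prodMk hV.aestronglyMeasurable)

variable [μ.IsAddHaarMeasure]

lemma norm_normed_convolution_le_indicator {F : Type*} [NormedAddCommGroup F] [NormedSpace ℝ F]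
    [CompleteSpace F] {f : E → F} {C r : ℝ} (hC : ∀ x, ‖f x‖ ≤ C) (B : ContDiffBump (0 : E))
    (hr : B.rOut ≤ r) (x : E) :
    ‖(B.normed μ ⋆[lsmul ℝ ℝ, μ] f) x‖ ≤ (cthickening r (tsupport f)).indicator (fun _ ↦ C) x := by
  by_cases hx : x ∈ cthickening r (tsupport f)
  · rw [indicator_of_mem hx]
    calc ‖(B.normed μ ⋆[lsmul ℝ ℝ, μ] f) x‖ ≤ ∫ t, B.normed μ t * C ∂μ := by
          refine norm_integral_le_of_norm_le (B.integrable_normed.mul_const C)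
            (Eventually.of_forall fun t ↦ ?_)
          rw [lsmul_apply, norm_smul, Real.norm_of_nonneg (B.nonneg_normed t)]
          exact mul_le_mul_of_nonneg_left (hC _) (B.nonneg_normed t)
      _ = C := by rw [integral_mul_const, B.integral_normed, one_mul]
  · have hzero : ∀ y ∈ ball x B.rOut, f y = 0 := fun y hy ↦ by
      by_contra hne
      refine hx (mem_cthickening_of_dist_le x y r _ (subset_tsupport f hne) ?_)
      exact (mem_ball'.1 hy).le.trans hr
    have hfx : f x = 0 := hzero x (mem_ball_self B.rOut_pos)
    rw [indicator_of_notMem hx, B.normed_convolution_eq_right, hfx, norm_zero]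
    exact fun y hy ↦ (hzero y hy).trans hfx.symm

lemma fderiv_normed_convolution {f : E → ℝ} (hf : ContDiff ℝ 1 f) (hfc : HasCompactSupport f)
    (B : ContDiffBump (0 : E)) :
    fderiv ℝ (B.normed μ ⋆[lsmul ℝ ℝ, μ] f) = B.normed μ ⋆[lsmul ℝ ℝ, μ] fderiv ℝ f :=
  funext fun x ↦ (hfc.hasFDerivAt_convolution_right (lsmul ℝ ℝ)
    B.integrable_normed.locallyIntegrable hf x).fderiv

variable (μ) in
/-- The inequality `div V + c ≥ 0` in the sense of distributions. -/
def DivAddNonneg (V : E → E) (c : E → ℝ) : Prop :=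
  ∀ φ : E → ℝ, ContDiff ℝ (⊤ : ℕ∞) φ → HasCompactSupport φ → (∀ x, 0 ≤ φ x) →
    0 ≤ ∫ x, (c x * φ x - fderiv ℝ φ x (V x)) ∂μ

lemma tendsto_integral_mul_sub_fderiv_convolution {ι : Type*} {l : Filter ι}
    [l.IsCountablyGenerated] {V : E → E} {c : E → ℝ} (hV : LocallyIntegrable V μ)
    (hc : LocallyIntegrable c μ) {ψ : E → ℝ} (hψ : ContDiff ℝ 1 ψ) (hψc : HasCompactSupport ψ)
    {B : ι → ContDiffBump (0 : E)} (hB : Tendsto (fun i ↦ (B i).rOut) l (nhds 0)) :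
    Tendsto (fun i ↦ ∫ x, (c x * ((B i).normed μ ⋆[lsmul ℝ ℝ, μ] ψ) x -
        fderiv ℝ ((B i).normed μ ⋆[lsmul ℝ ℝ, μ] ψ) x (V x)) ∂μ) l
      (nhds (∫ x, (c x * ψ x - fderiv ℝ ψ x (V x)) ∂μ)) := by
  have hψ' : Continuous (fderiv ℝ ψ) := hψ.continuous_fderiv one_ne_zero
  obtain ⟨M, hM⟩ := hψc.exists_bound_of_continuous hψ.continuous
  obtain ⟨M', hM'⟩ := (hψc.fderiv ℝ).exists_bound_of_continuous hψ'
  set K := cthickening 1 (tsupport ψ)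
  set K' := cthickening 1 (tsupport (fderiv ℝ ψ))
  have hK : IsCompact K := hψc.isCompact.cthickening
  have hK' : IsCompact K' := (hψc.fderiv ℝ).isCompact.cthickening
  simp only [fderiv_normed_convolution hψ hψc]
  refine tendsto_integral_filter_of_dominated_convergence
    (fun x ↦ K.indicator (fun _ ↦ M) x * ‖c x‖ + K'.indicator (fun _ ↦ M') x * ‖V x‖) ?_ ?_ ?_ ?_
  · refine Eventually.of_forall fun i ↦ ?_
    have hΦ : Continuous ((B i).normed μ ⋆[lsmul ℝ ℝ, μ] ψ) :=
      hψc.continuous_convolution_right _ (B i).integrable_normed.locallyIntegrable hψ.continuous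
    have hΦ' : Continuous ((B i).normed μ ⋆[lsmul ℝ ℝ, μ] fderiv ℝ ψ) :=
      (hψc.fderiv ℝ).continuous_convolution_right _
        (B i).integrable_normed.locallyIntegrable hψ'
    exact (hc.aestronglyMeasurable.mul hΦ.aestronglyMeasurable).sub
      (isBoundedBilinearMap_apply.continuous.comp_aestronglyMeasurable
        (hΦ'.aestronglyMeasurable.prodMk hV.aestronglyMeasurable))
  · filter_upwards [hB.eventually_le_const one_pos] with i hi
    refine Eventually.of_forall fun x ↦ (norm_sub_le _ _).trans (add_le_add ?_ ?_)
    · rw [norm_mul, mul_comm]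
      exact mul_le_mul_of_nonneg_right (norm_normed_convolution_le_indicator hM (B i) hi x)
        (norm_nonneg _)
    · exact (le_opNorm _ _).trans (mul_le_mul_of_nonneg_right
        (norm_normed_convolution_le_indicator hM' (B i) hi x) (norm_nonneg _))
  · have hcK := (hc.integrableOn_isCompact hK).norm.const_mul M
    have hVK := (hV.integrableOn_isCompact hK').norm.const_mul M'
    simp only [← indicator_mul_left K _ (‖c ·‖), ← indicator_mul_left K' _ (‖V ·‖)]
    exact (IntegrableOn.integrable_indicator hcK hK.measurableSet).add
      (IntegrableOn.integrable_indicator hVK hK'.measurableSet)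
  · refine Eventually.of_forall fun x ↦ Tendsto.sub (Tendsto.const_mul _ ?_) ?_
    · exact ContDiffBump.convolution_tendsto_right_of_continuous hB hψ.continuous x
    · exact ((ContinuousLinearMap.apply ℝ ℝ (V x)).continuous.tendsto _).comp
        (ContDiffBump.convolution_tendsto_right_of_continuous hB hψ' x)

lemma DivAddNonneg.integral_nonneg {V : E → E} {c : E → ℝ} (h : DivAddNonneg μ V c)
    (hV : LocallyIntegrable V μ) (hc : LocallyIntegrable c μ) {ψ : E → ℝ} (hψ : ContDiff ℝ 1 ψ)
    (hψc : HasCompactSupport ψ) (hψ0 : ∀ x, 0 ≤ ψ x) :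
    0 ≤ ∫ x, (c x * ψ x - fderiv ℝ ψ x (V x)) ∂μ := by
  let B : ℕ → ContDiffBump (0 : E) := fun j ↦
    ⟨1 / (j + 1) / 2, 1 / (j + 1), by positivity, half_lt_self (by positivity)⟩
  have hB : Tendsto (fun j ↦ (B j).rOut) atTop (nhds 0) := tendsto_one_div_add_atTop_nhds_zero_nat
  refine ge_of_tendsto' (tendsto_integral_mul_sub_fderiv_convolution hV hc hψ hψc hB) fun j ↦ ?_
  refine h _ ?_ ((B j).hasCompactSupport_normed.convolution _ hψc) fun x ↦ ?_
  · exact (B j).hasCompactSupport_normed.contDiff_convolution_left _ (B j).contDiff_normed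
      hψ.continuous.locallyIntegrable
  · exact MeasureTheory.integral_nonneg fun t ↦ mul_nonneg ((B j).nonneg_normed t) (hψ0 _)

end WeakDivergence

section Energy

variable {E : Type*} [NormedAddCommGroup E] [NormedSpace ℝ E] [MeasurableSpace E]
  {μ : Measure E} {p C₁ C₂ κ a s : ℝ} {S T : Set E} {V : E → E} {c u χ η : E → ℝ}

variable (μ p C₁ C₂ V c u) in
/-- `u` is a `C¹` weak solution of `div V + c ≥ 0` whose flux `V` is comparable to that of the
`p`-Laplacian of `u`. Only the values of the flux along `u` enter, so that `V x` plays the role of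
`A(x, Du(x))`. -/
structure IsSubsolution : Prop where
  contDiff : ContDiff ℝ 1 u
  coercive : ∀ x, C₁ * ‖fderiv ℝ u x‖ ^ p ≤ fderiv ℝ u x (V x)
  growth : ∀ x, ‖V x‖ ≤ C₂ * ‖fderiv ℝ u x‖ ^ (p - 1)
  locallyIntegrable_flux : LocallyIntegrable V μ
  locallyIntegrable_lower : LocallyIntegrable c μ
  divAddNonneg : DivAddNonneg μ V c

namespace IsSubsolution

lemma sub_const (h : IsSubsolution μ p C₁ C₂ V c u) (k : ℝ) :
    IsSubsolution μ p C₁ C₂ V c fun x ↦ u x - k where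
  contDiff := h.contDiff.sub contDiff_const
  coercive x := by simpa only [fderiv_sub_const] using h.coercive x
  growth x := by simpa only [fderiv_sub_const] using h.growth x
  locallyIntegrable_flux := h.locallyIntegrable_flux
  locallyIntegrable_lower := h.locallyIntegrable_lower
  divAddNonneg := h.divAddNonneg

lemma continuous_fderiv (h : IsSubsolution μ p C₁ C₂ V c u) : Continuous (fderiv ℝ u) :=
  h.contDiff.continuous_fderiv one_ne_zero

lemma continuous_norm_fderiv_rpow (h : IsSubsolution μ p C₁ C₂ V c u) (hs : 0 ≤ s) :
    Continuous fun x ↦ ‖fderiv ℝ u x‖ ^ s :=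
  h.continuous_fderiv.norm.rpow_const fun _ ↦ Or.inr hs

lemma flux_le_fderiv_posPart_rpow_mul (h : IsSubsolution μ p C₁ C₂ V c u) (hs : 1 < s)
    (hχ : ContDiff ℝ 1 χ) {x : E} (hχ0 : 0 ≤ χ x) :
    s * C₁ * (‖fderiv ℝ u x‖ ^ p * (u x)⁺ ^ (s - 1) * χ x)
        - C₂ * (‖fderiv ℝ u x‖ ^ (p - 1) * (u x)⁺ ^ s * ‖fderiv ℝ χ x‖) ≤
      fderiv ℝ (fun x ↦ (u x)⁺ ^ s * χ x) x (V x) := by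
  have hcoercive : s * (u x)⁺ ^ (s - 1) * χ x * (C₁ * ‖fderiv ℝ u x‖ ^ p) ≤
      s * (u x)⁺ ^ (s - 1) * χ x * fderiv ℝ u x (V x) := by
    gcongr
    exact h.coercive x
  have hgrowth : -(‖fderiv ℝ χ x‖ * (C₂ * ‖fderiv ℝ u x‖ ^ (p - 1))) ≤ fderiv ℝ χ x (V x) :=
    neg_le_of_abs_le <| ((fderiv ℝ χ x).le_opNorm _).trans <|
      mul_le_mul_of_nonneg_left (h.growth x) (norm_nonneg _)
  rw [fderiv_posPart_rpow_mul hs (h.contDiff.differentiable one_ne_zero x)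
    (hχ.differentiable one_ne_zero x)]
  simp only [add_apply, smul_apply, smul_eq_mul]
  linear_combination hcoercive + (u x)⁺ ^ s * hgrowth

end IsSubsolution

variable (p C₁ C₂) in
/-- The constant of the Caccioppoli inequality `IsSubsolution.caccioppoli`. -/
def caccioppoliConst : ℝ := C₂ * p * (2 * C₂ * p / C₁) ^ (p - 1)

lemma caccioppoliConst_pos (hp : 0 < p) (hC₁ : 0 < C₁) (hC₂ : 0 < C₂) :
    0 < caccioppoliConst p C₁ C₂ := by
  unfold caccioppoliConst
  positivity

lemma caccioppoli_young (hp : 1 ≤ p) (hC₁ : 0 < C₁) (hC₂ : 0 < C₂) (hs : 1 ≤ s) {D w e G : ℝ}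
    (hD : 0 ≤ D) (hw : 0 ≤ w) (he : 0 ≤ e) (hG : 0 ≤ G) :
    C₂ * (D ^ (p - 1) * w ^ s * (p * e ^ (p - 1) * G)) ≤
      C₁ / 2 * (D ^ p * w ^ (s - 1) * e ^ p) +
        caccioppoliConst p C₁ C₂ * (w ^ (s + p - 1) * G ^ p) := by
  have hp0 : p ≠ 0 := by linarith
  have hyoung := rpow_sub_one_mul_le_add (ε := C₁ / (2 * C₂ * p)) hp (by positivity)
    (mul_nonneg hD he) (mul_nonneg hw hG)
  rw [Real.mul_rpow hD he, Real.mul_rpow hD he, Real.mul_rpow hw hG, inv_div] at hyoung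
  calc C₂ * (D ^ (p - 1) * w ^ s * (p * e ^ (p - 1) * G))
      = C₂ * p * w ^ (s - 1) * (D ^ (p - 1) * e ^ (p - 1) * (w * G)) := by
        rw [rpow_eq_rpow_sub_one_mul hw (by linarith)]
        ring
    _ ≤ C₂ * p * w ^ (s - 1) * (C₁ / (2 * C₂ * p) * (D ^ p * e ^ p) +
          (2 * C₂ * p / C₁) ^ (p - 1) * (w ^ p * G ^ p)) := by gcongr
    _ = C₁ / 2 * (D ^ p * w ^ (s - 1) * e ^ p) +
          C₂ * p * (2 * C₂ * p / C₁) ^ (p - 1) * (w ^ (s - 1) * w ^ p * G ^ p) := by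
        field_simp
    _ = _ := by
        rw [caccioppoliConst, ← Real.rpow_add_of_nonneg hw (by linarith) (by linarith)]
        ring_nf

variable (μ p κ a S c u) in
/-- Where `u > 0` on `S`, the lower order term `c` is dominated by the coercive part of the energy
up to a sink of strength `a`; tested with powers of `u⁺` this reads
`∫ c u⁺ˢχ + a ∫ u⁺ˢχ ≤ κ ∫ ‖Du‖ᵖu⁺ˢ⁻¹χ`. -/
def AbsorbedOn : Prop :=
  ∀ᵐ x ∂μ, x ∈ S → 0 < u x → (c x + a) * u x ≤ κ * ‖fderiv ℝ u x‖ ^ p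

namespace AbsorbedOn

lemma mono (h : AbsorbedOn μ p κ a S c u) (hTS : T ⊆ S) : AbsorbedOn μ p κ a T c u :=
  Eventually.mono h fun _ hx hxT ↦ hx (hTS hxT)

lemma ae_mul_rpow_le (h : AbsorbedOn μ p κ a S c u) (hs : 1 < s) (hχ0 : ∀ x, 0 ≤ χ x)
    (hχS : Function.support χ ⊆ S) : ∀ᵐ x ∂μ, c x * ((u x)⁺ ^ s * χ x) ≤
      κ * (‖fderiv ℝ u x‖ ^ p * (u x)⁺ ^ (s - 1) * χ x) - a * ((u x)⁺ ^ s * χ x) := by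
  filter_upwards [h] with x hx
  by_cases hxS : x ∈ S
  · rcases le_or_gt (u x) 0 with hux | hux
    · rw [posPart_of_nonpos hux, Real.zero_rpow (by linarith), Real.zero_rpow (by linarith)]
      simp
    · have hmul := mul_le_mul_of_nonneg_right (hx hxS hux)
        (mul_nonneg (Real.rpow_nonneg hux.le (s - 1)) (hχ0 x))
      rw [posPart_of_nonneg hux.le, rpow_eq_rpow_sub_one_mul hux.le (by linarith : s ≠ 0)]
      linear_combination hmul
  · have hχx : χ x = 0 := by simpa using fun hne ↦ hxS (hχS hne)
    simp [hχx]

end AbsorbedOn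

variable [BorelSpace E] [μ.IsAddHaarMeasure]

lemma IsSubsolution.integrable_norm_fderiv_rpow_mul (h : IsSubsolution μ p C₁ C₂ V c u) {r t : ℝ}
    (hr : 0 ≤ r) (ht : 0 ≤ t) (hχ : Continuous χ) (hχc : HasCompactSupport χ) :
    Integrable (fun x ↦ ‖fderiv ℝ u x‖ ^ r * (u x)⁺ ^ t * χ x) μ :=
  (((h.continuous_norm_fderiv_rpow hr).mul (continuous_posPart_rpow h.contDiff.continuous ht)).mul
    hχ).integrable_of_hasCompactSupport hχc.mul_left

variable [FiniteDimensional ℝ E]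

lemma IsSubsolution.energy_le (h : IsSubsolution μ p C₁ C₂ V c u) (hp : 1 ≤ p) (hs : 1 < s)
    (hχ : ContDiff ℝ 1 χ) (hχc : HasCompactSupport χ) (hχ0 : ∀ x, 0 ≤ χ x) :
    s * C₁ * ∫ x, ‖fderiv ℝ u x‖ ^ p * (u x)⁺ ^ (s - 1) * χ x ∂μ ≤
      (∫ x, c x * ((u x)⁺ ^ s * χ x) ∂μ)
        + C₂ * ∫ x, ‖fderiv ℝ u x‖ ^ (p - 1) * (u x)⁺ ^ s * ‖fderiv ℝ χ x‖ ∂μ := by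
  set ψ : E → ℝ := fun x ↦ (u x)⁺ ^ s * χ x
  have hψ : ContDiff ℝ 1 ψ := ((contDiff_posPart_rpow hs).comp h.contDiff).mul hχ
  have hψc : HasCompactSupport ψ := hχc.mul_left
  have hcψ : Integrable (fun x ↦ c x * ψ x) μ :=
    h.locallyIntegrable_lower.integrable_smul_right_of_hasCompactSupport hψ.continuous hψc
  have hVψ : Integrable (fun x ↦ fderiv ℝ ψ x (V x)) μ :=
    integrable_clm_apply_of_hasCompactSupport h.locallyIntegrable_flux
      (hψ.continuous_fderiv one_ne_zero) (hψc.fderiv ℝ)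
  have hmain := h.integrable_norm_fderiv_rpow_mul (μ := μ) (r := p) (t := s - 1) (by linarith)
    (by linarith) hχ.continuous hχc
  have herr := h.integrable_norm_fderiv_rpow_mul (μ := μ) (r := p - 1) (t := s) (by linarith)
    (by linarith) (hχ.continuous_fderiv one_ne_zero).norm (hχc.fderiv ℝ).norm
  have hflux := integral_mono ((hmain.const_mul (s * C₁)).sub (herr.const_mul C₂)) hVψ
    fun x ↦ h.flux_le_fderiv_posPart_rpow_mul hs hχ (hχ0 x)
  have hweak := h.divAddNonneg.integral_nonneg h.locallyIntegrable_flux h.locallyIntegrable_lower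
    hψ hψc fun x ↦ mul_nonneg (by positivity) (hχ0 x)
  simp only [Pi.sub_apply] at hflux
  rw [integral_sub (hmain.const_mul _) (herr.const_mul _), integral_const_mul,
    integral_const_mul] at hflux
  rw [integral_sub hcψ hVψ] at hweak
  linarith

lemma IsSubsolution.energy_le_of_absorbedOn (h : IsSubsolution μ p C₁ C₂ V c u) (hp : 1 ≤ p)
    (hc : AbsorbedOn μ p κ a S c u) (hs : 1 < s) (hχ : ContDiff ℝ 1 χ) (hχc : HasCompactSupport χ)
    (hχ0 : ∀ x, 0 ≤ χ x) (hχS : Function.support χ ⊆ S) :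
    a * (∫ x, (u x)⁺ ^ s * χ x ∂μ)
        + (s * C₁ - κ) * ∫ x, ‖fderiv ℝ u x‖ ^ p * (u x)⁺ ^ (s - 1) * χ x ∂μ ≤
      C₂ * ∫ x, ‖fderiv ℝ u x‖ ^ (p - 1) * (u x)⁺ ^ s * ‖fderiv ℝ χ x‖ ∂μ := by
  have hψ : Continuous fun x ↦ (u x)⁺ ^ s * χ x :=
    (continuous_posPart_rpow h.contDiff.continuous (by linarith)).mul hχ.continuous
  have hψc : HasCompactSupport fun x ↦ (u x)⁺ ^ s * χ x := hχc.mul_left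
  have hmain := h.integrable_norm_fderiv_rpow_mul (μ := μ) (r := p) (t := s - 1) (by linarith)
    (by linarith) hχ.continuous hχc
  have hsink := (hψ.integrable_of_hasCompactSupport (μ := μ) hψc).const_mul a
  have hlower := integral_mono_ae
    (h.locallyIntegrable_lower.integrable_smul_right_of_hasCompactSupport hψ hψc)
    ((hmain.const_mul κ).sub hsink) (hc.ae_mul_rpow_le hs hχ0 hχS)
  simp only [smul_eq_mul, Pi.sub_apply] at hlower
  rw [integral_sub (hmain.const_mul κ) hsink, integral_const_mul, integral_const_mul] at hlower
  linarith [h.energy_le hp hs hχ hχc hχ0]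

theorem IsSubsolution.caccioppoli (h : IsSubsolution μ p C₁ C₂ V c u) (hp : 1 < p) (hC₁ : 0 < C₁)
    (hC₂ : 0 < C₂) (hc : AbsorbedOn μ p (C₁ / 4) a S c u) (hs : 1 < s) (hη : ContDiff ℝ 1 η)
    (hηc : HasCompactSupport η) (hη0 : ∀ x, 0 ≤ η x) (hηS : Function.support η ⊆ S) :
    a * (∫ x, (u x)⁺ ^ s * η x ^ p ∂μ)
        + C₁ / 4 * (∫ x, ‖fderiv ℝ u x‖ ^ p * (u x)⁺ ^ (s - 1) * η x ^ p ∂μ) ≤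
      caccioppoliConst p C₁ C₂ * ∫ x, (u x)⁺ ^ (s + p - 1) * ‖fderiv ℝ η x‖ ^ p ∂μ := by
  have hχ : ContDiff ℝ 1 fun x ↦ η x ^ p := hη.rpow_const_of_le (by exact_mod_cast hp.le)
  have hχc : HasCompactSupport fun x ↦ η x ^ p := hasCompactSupport_rpow (by linarith) hηc
  have hχ0 : ∀ x, 0 ≤ η x ^ p := fun x ↦ Real.rpow_nonneg (hη0 x) p
  have hDη : ∀ x, ‖fderiv ℝ (fun x ↦ η x ^ p) x‖ = p * η x ^ (p - 1) * ‖fderiv ℝ η x‖ :=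
    fun x ↦ norm_fderiv_rpow hp.le (hη.differentiable one_ne_zero x) (hη0 x)
  have hmain := h.integrable_norm_fderiv_rpow_mul (μ := μ) (r := p) (t := s - 1) (by linarith)
    (by linarith) hχ.continuous hχc
  have herr : Integrable (fun x ↦ (u x)⁺ ^ (s + p - 1) * ‖fderiv ℝ η x‖ ^ p) μ :=
    ((continuous_posPart_rpow h.contDiff.continuous (by linarith)).mul
      ((hη.continuous_fderiv one_ne_zero).norm.rpow_const fun _ ↦
        Or.inr (by linarith))).integrable_of_hasCompactSupport
          (hasCompactSupport_rpow (by linarith) (hηc.fderiv ℝ).norm).mul_left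
  have hyoung : C₂ * (∫ x, ‖fderiv ℝ u x‖ ^ (p - 1) * (u x)⁺ ^ s *
        ‖fderiv ℝ (fun x ↦ η x ^ p) x‖ ∂μ) ≤
      C₁ / 2 * (∫ x, ‖fderiv ℝ u x‖ ^ p * (u x)⁺ ^ (s - 1) * η x ^ p ∂μ) +
        caccioppoliConst p C₁ C₂ * ∫ x, (u x)⁺ ^ (s + p - 1) * ‖fderiv ℝ η x‖ ^ p ∂μ := by
    simp only [← integral_const_mul, hDη]
    rw [← integral_add (hmain.const_mul _) (herr.const_mul _)]
    refine integral_mono_of_nonneg (Eventually.of_forall fun x ↦ ?_)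
      ((hmain.const_mul _).add (herr.const_mul _)) (Eventually.of_forall fun x ↦
        caccioppoli_young hp.le hC₁ hC₂ hs.le (norm_nonneg _) (posPart_nonneg _) (hη0 x)
          (norm_nonneg _))
    have := hη0 x
    simp only [Pi.zero_apply]
    positivity
  have hnonneg : 0 ≤ ∫ x, ‖fderiv ℝ u x‖ ^ p * (u x)⁺ ^ (s - 1) * η x ^ p ∂μ :=
    integral_nonneg fun x ↦ mul_nonneg (by positivity) (hχ0 x)
  have hsupp : Function.support (fun x ↦ η x ^ p) ⊆ S := fun x hx ↦ hηS fun h0 ↦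
    hx (by simp only [h0, Real.zero_rpow (by linarith : p ≠ 0)])
  have henergy := h.energy_le_of_absorbedOn hp.le hc hs hχ hχc hχ0 hsupp
  nlinarith [mul_nonneg (mul_nonneg (sub_nonneg.2 hs.le) hC₁.le) hnonneg]

end Energy

section Cutoff

variable {E : Type*} [NormedAddCommGroup E] [NormedSpace ℝ E] {L p : ℝ} {x₀ : E} {r : ℝ}
  {f η : E → ℝ}

variable (L x₀ r η) in
/-- `η` is a `C¹` cutoff function between the concentric balls of radii `r / 2` and `r`, with
gradient at most `L / r`. -/
structure IsCutoff : Prop where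
  contDiff : ContDiff ℝ 1 η
  nonneg : ∀ x, 0 ≤ η x
  le_one : ∀ x, η x ≤ 1
  hasCompactSupport : HasCompactSupport η
  tsupport_subset : tsupport η ⊆ ball x₀ r
  eq_one : ∀ x ∈ ball x₀ (r / 2), η x = 1
  norm_fderiv_le : ∀ x, ‖fderiv ℝ η x‖ ≤ L / r

variable (E) in
lemma exists_isCutoff [FiniteDimensional ℝ E] :
    ∃ L > 0, ∀ (x₀ : E) (r : ℝ), 0 < r → ∃ η : E → ℝ, IsCutoff L x₀ r η := by
  let B : ContDiffBump (0 : E) := ⟨1 / 2, 3 / 4, by norm_num, by norm_num⟩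
  have hB : ContDiff ℝ 1 B := B.contDiff
  obtain ⟨C, hC⟩ := (B.hasCompactSupport.fderiv ℝ).exists_bound_of_continuous
    (hB.continuous_fderiv one_ne_zero)
  refine ⟨|C| + 1, by positivity, fun x₀ r hr ↦ ⟨fun x ↦ B (r⁻¹ • (x - x₀)), ?_⟩⟩
  have hrinv : ‖r⁻¹‖ = r⁻¹ := Real.norm_of_nonneg (by positivity)
  have hsub : tsupport (fun x ↦ B (r⁻¹ • (x - x₀))) ⊆ closedBall x₀ (3 / 4 * r) := by
    refine closure_minimal (fun x hx ↦ ?_) isClosed_closedBall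
    have hmem : r⁻¹ • (x - x₀) ∈ Function.support B := hx
    rw [B.support_eq, mem_ball_zero_iff, norm_smul, hrinv, inv_mul_lt_iff₀ hr, mul_comm] at hmem
    exact mem_closedBall_iff_norm.2 hmem.le
  have hderiv : ∀ x, HasFDerivAt (fun x ↦ B (r⁻¹ • (x - x₀)))
      (fderiv ℝ B (r⁻¹ • (x - x₀)) ∘L (r⁻¹ • ContinuousLinearMap.id ℝ E)) x := fun x ↦
    (hB.differentiable one_ne_zero _).hasFDerivAt.comp x
      (((hasFDerivAt_id x).sub_const x₀).const_smul r⁻¹)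
  exact
    { contDiff := hB.comp ((contDiff_id.sub contDiff_const).const_smul _)
      nonneg := fun x ↦ B.nonneg
      le_one := fun x ↦ B.le_one
      hasCompactSupport := (isCompact_closedBall x₀ (3 / 4 * r)).of_isClosed_subset
        (isClosed_tsupport _) hsub
      tsupport_subset := hsub.trans (closedBall_subset_ball (by linarith))
      eq_one := fun x hx ↦ by
        refine B.one_of_mem_closedBall ?_
        rw [mem_closedBall_zero_iff, norm_smul, hrinv, inv_mul_le_iff₀ hr]
        exact (mem_ball_iff_norm.1 hx).le.trans_eq (div_eq_mul_one_div r 2)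
      norm_fderiv_le := fun x ↦ by
        rw [(hderiv x).fderiv]
        calc _ ≤ ‖fderiv ℝ B (r⁻¹ • (x - x₀))‖ * ‖r⁻¹ • ContinuousLinearMap.id ℝ E‖ :=
              ContinuousLinearMap.opNorm_comp_le _ _
          _ ≤ (|C| + 1) * (r⁻¹ * 1) := by
              rw [norm_smul, hrinv]
              gcongr
              · exact (hC _).trans ((le_abs_self C).trans (le_add_of_nonneg_right zero_le_one))
              · exact ContinuousLinearMap.norm_id_le
          _ = (|C| + 1) / r := by rw [mul_one, div_eq_mul_inv] }

namespace IsCutoff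

lemma support_subset (h : IsCutoff L x₀ r η) : Function.support η ⊆ ball x₀ r :=
  (subset_tsupport η).trans h.tsupport_subset

lemma fderiv_eq_zero (h : IsCutoff L x₀ r η) {x : E} (hx : x ∉ ball x₀ r) : fderiv ℝ η x = 0 :=
  Function.notMem_support.1 fun hne ↦ hx (h.tsupport_subset (support_fderiv_subset ℝ hne))

lemma contDiff_rpow (h : IsCutoff L x₀ r η) (hp : 1 ≤ p) : ContDiff ℝ 1 fun x ↦ η x ^ p :=
  h.contDiff.rpow_const_of_le (by exact_mod_cast hp)

variable [MeasurableSpace E] [OpensMeasurableSpace E] {μ : Measure E}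

lemma setIntegral_le (h : IsCutoff L x₀ r η) (hf : Integrable (fun x ↦ f x * η x ^ p) μ)
    (hf0 : ∀ x, 0 ≤ f x) : ∫ x in ball x₀ (r / 2), f x ∂μ ≤ ∫ x, f x * η x ^ p ∂μ := by
  have hcongr : ∫ x in ball x₀ (r / 2), f x ∂μ = ∫ x in ball x₀ (r / 2), f x * η x ^ p ∂μ :=
    setIntegral_congr_fun measurableSet_ball fun x hx ↦ by simp [h.eq_one x hx]
  rw [hcongr]
  exact setIntegral_le_integral hf <| Eventually.of_forall fun x ↦
    mul_nonneg (hf0 x) (Real.rpow_nonneg (h.nonneg x) p)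

lemma integral_mul_norm_fderiv_rpow_le (h : IsCutoff L x₀ r η) (hp : 0 < p)
    (hf : IntegrableOn f (ball x₀ r) μ) (hf0 : ∀ x, 0 ≤ f x) :
    ∫ x, f x * ‖fderiv ℝ η x‖ ^ p ∂μ ≤ (L / r) ^ p * ∫ x in ball x₀ r, f x ∂μ := by
  have hbound : ∀ x, f x * ‖fderiv ℝ η x‖ ^ p ≤ (L / r) ^ p * (ball x₀ r).indicator f x := by
    intro x
    by_cases hx : x ∈ ball x₀ r
    · rw [indicator_of_mem hx, mul_comm]
      have hfx := hf0 x
      gcongr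
      exact h.norm_fderiv_le x
    · simp [h.fderiv_eq_zero hx, Real.zero_rpow hp.ne', hx]
  rw [← integral_indicator measurableSet_ball, ← integral_const_mul]
  exact integral_mono_of_nonneg
    (Eventually.of_forall fun x ↦ mul_nonneg (hf0 x) (by positivity))
    ((hf.integrable_indicator measurableSet_ball).const_mul _) (Eventually.of_forall hbound)

end IsCutoff

end Cutoff

section Sobolev

variable {E : Type*} [NormedAddCommGroup E] [NormedSpace ℝ E] [FiniteDimensional ℝ E]
  [MeasurableSpace E] [BorelSpace E] (μ : Measure E) [μ.IsAddHaarMeasure]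

lemma exists_integral_norm_rpow_le_integral_norm_fderiv_rpow (F' : Type*) [NormedAddCommGroup F']
    [NormedSpace ℝ F'] (hE : 2 ≤ Module.finrank ℝ E) :
    ∃ K > 0, ∀ F : E → F', ContDiff ℝ 1 F → HasCompactSupport F →
      ∫ x, ‖F x‖ ^ Real.conjExponent (Module.finrank ℝ E) ∂μ ≤
        K * (∫ x, ‖fderiv ℝ F x‖ ∂μ) ^ Real.conjExponent (Module.finrank ℝ E) := by
  have hE' : (1 : ℝ) < Module.finrank ℝ E := by exact_mod_cast hE
  set κ : ℝ := Real.conjExponent (Module.finrank ℝ E)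
  have hconj : Real.HolderConjugate (Module.finrank ℝ E) κ := .conjExponent hE'
  have hκ : 0 < κ := hconj.symm.pos
  let C := lintegralPowLePowLIntegralFDerivConst μ κ
  refine ⟨(C : ℝ) + 1, by positivity, fun F hF hFc ↦ ?_⟩
  have hDF : Integrable (fun x ↦ ‖fderiv ℝ F x‖) μ :=
    ((hF.continuous_fderiv one_ne_zero).integrable_of_hasCompactSupport (hFc.fderiv ℝ)).norm
  have hleft : ∫ x, ‖F x‖ ^ κ ∂μ = (∫⁻ x, ‖F x‖ₑ ^ κ ∂μ).toReal := by
    rw [integral_eq_lintegral_of_nonneg_ae (Eventually.of_forall fun x ↦ by positivity)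
      (hF.continuous.norm.rpow_const fun _ ↦ Or.inr hκ.le).aestronglyMeasurable]
    simp only [← ENNReal.ofReal_rpow_of_nonneg (norm_nonneg _) hκ.le, ofReal_norm]
  have hright : ∫⁻ x, ‖fderiv ℝ F x‖ₑ ∂μ = ENNReal.ofReal (∫ x, ‖fderiv ℝ F x‖ ∂μ) := by
    rw [ofReal_integral_eq_lintegral_ofReal hDF (Eventually.of_forall fun _ ↦ norm_nonneg _)]
    simp only [ofReal_norm]
  have hgns := lintegral_pow_le_pow_lintegral_fderiv μ hF hFc hconj
  have hI0 : 0 ≤ ∫ x, ‖fderiv ℝ F x‖ ∂μ := integral_nonneg fun _ ↦ norm_nonneg _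
  rw [hright, ENNReal.ofReal_rpow_of_nonneg hI0 hκ.le] at hgns
  calc ∫ x, ‖F x‖ ^ κ ∂μ
      ≤ (C * ENNReal.ofReal ((∫ x, ‖fderiv ℝ F x‖ ∂μ) ^ κ)).toReal :=
        hleft ▸ ENNReal.toReal_mono (by finiteness) hgns
    _ = C * (∫ x, ‖fderiv ℝ F x‖ ∂μ) ^ κ := by
        rw [ENNReal.toReal_mul, ENNReal.toReal_ofReal (by positivity), ENNReal.coe_toReal]
    _ ≤ (C + 1) * (∫ x, ‖fderiv ℝ F x‖ ∂μ) ^ κ := by gcongr; linarith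

end Sobolev

section BallEstimates

variable {E : Type*} [NormedAddCommGroup E] [NormedSpace ℝ E]
  {p C₁ C₂ L a s t r : ℝ} {x₀ : E} {V : E → E} {c u η : E → ℝ}

lemma rpow_sub_one_mul_le_div_add {w D : ℝ} (hp : 1 < p) (hpt : p ≤ t) (hr : 0 < r) (hw : 0 ≤ w)
    (hD : 0 ≤ D) : w ^ (t - 1) * D ≤ w ^ t / r + r ^ (p - 1) * (D ^ p * w ^ (t - p)) := by
  have hyoung := rpow_sub_one_mul_le_add hp.le (inv_pos.2 hr) hw hD
  rw [inv_inv] at hyoung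
  calc w ^ (t - 1) * D = w ^ (t - p) * (w ^ (p - 1) * D) := by
        rw [← mul_assoc, ← Real.rpow_add_of_nonneg hw (by linarith) (by linarith)]
        ring_nf
    _ ≤ w ^ (t - p) * (r⁻¹ * w ^ p + r ^ (p - 1) * D ^ p) := by gcongr
    _ = (w ^ (t - p) * w ^ p) / r + r ^ (p - 1) * (D ^ p * w ^ (t - p)) := by ring
    _ = w ^ t / r + r ^ (p - 1) * (D ^ p * w ^ (t - p)) := by
        rw [← Real.rpow_add_of_nonneg hw (by linarith) (by linarith), sub_add_cancel]

variable (p C₁ C₂ L t) in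
/-- The constant of the gradient bound `IsSubsolution.integral_norm_fderiv_posPart_rpow_mul_le`. -/
def cutoffGradientConst : ℝ :=
  t * (4 / C₁ * (caccioppoliConst p C₁ C₂ * L ^ p)) + (t + p * L)

lemma IsCutoff.norm_fderiv_posPart_rpow_mul_le (hη : IsCutoff L x₀ r η) (hr : 0 < r) (hp : 1 < p)
    (hpt : p ≤ t) (hu : ContDiff ℝ 1 u) (x : E) :
    ‖fderiv ℝ (fun x ↦ (u x)⁺ ^ t * η x ^ p) x‖ ≤
      t * r ^ (p - 1) * (‖fderiv ℝ u x‖ ^ p * (u x)⁺ ^ (t - p) * η x ^ p) +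
        (t + p * L) / r * (ball x₀ r).indicator (fun x ↦ (u x)⁺ ^ t) x := by
  have ht : 0 < t := by linarith
  have hηp := (hη.contDiff_rpow hp.le).differentiable one_ne_zero x
  have hηx := hη.nonneg x
  rw [fderiv_posPart_rpow_mul (by linarith) (hu.differentiable one_ne_zero x) hηp]
  refine (norm_add_le _ _).trans ?_
  rw [norm_smul, norm_smul, norm_smul,
    norm_fderiv_rpow hp.le (hη.contDiff.differentiable one_ne_zero x) hηx,
    Real.norm_of_nonneg (by positivity), Real.norm_of_nonneg (by positivity),
    Real.norm_of_nonneg (by positivity)]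
  by_cases hx : x ∈ ball x₀ r
  · rw [indicator_of_mem hx]
    have hcut : p * η x ^ (p - 1) * ‖fderiv ℝ η x‖ ≤ p * 1 * (L / r) := by
      gcongr
      · exact Real.rpow_le_one hηx (hη.le_one x) (by linarith)
      · exact hη.norm_fderiv_le x
    have hsink : (u x)⁺ ^ t / r * η x ^ p ≤ (u x)⁺ ^ t / r :=
      mul_le_of_le_one_right (by positivity) (Real.rpow_le_one hηx (hη.le_one x) (by linarith))
    have hyoung := mul_le_mul_of_nonneg_left
      (rpow_sub_one_mul_le_div_add hp hpt hr (posPart_nonneg (u x)) (norm_nonneg (fderiv ℝ u x)))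
      (by positivity : 0 ≤ t * η x ^ p)
    linear_combination (u x)⁺ ^ t * hcut + hyoung + t * hsink
  · have hηx0 : η x = 0 := Function.notMem_support.1 fun hne ↦ hx (hη.support_subset hne)
    simp [hη.fderiv_eq_zero hx, hηx0, hx, Real.zero_rpow (by linarith : p ≠ 0)]

variable [FiniteDimensional ℝ E] [MeasurableSpace E] [BorelSpace E] {μ : Measure E}
  [μ.IsAddHaarMeasure]

lemma integrableOn_ball_of_continuous {f : E → ℝ} (hf : Continuous f) :
    IntegrableOn f (ball x₀ r) μ :=
  (hf.continuousOn.integrableOn_compact (isCompact_closedBall x₀ r)).mono_set ball_subset_closedBall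

namespace IsSubsolution

lemma caccioppoli_cutoff (h : IsSubsolution μ p C₁ C₂ V c u) (hp : 1 < p) (hC₁ : 0 < C₁)
    (hC₂ : 0 < C₂) (hc : AbsorbedOn μ p (C₁ / 4) a (ball x₀ r) c u) (hs : 1 < s)
    (hη : IsCutoff L x₀ r η) :
    a * (∫ x, (u x)⁺ ^ s * η x ^ p ∂μ)
        + C₁ / 4 * (∫ x, ‖fderiv ℝ u x‖ ^ p * (u x)⁺ ^ (s - 1) * η x ^ p ∂μ) ≤
      caccioppoliConst p C₁ C₂ * ((L / r) ^ p * ∫ x in ball x₀ r, (u x)⁺ ^ (s + p - 1) ∂μ) :=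
  (h.caccioppoli hp hC₁ hC₂ hc hs hη.contDiff hη.hasCompactSupport hη.nonneg
    hη.support_subset).trans <| mul_le_mul_of_nonneg_left
      (hη.integral_mul_norm_fderiv_rpow_le (by linarith) (integrableOn_ball_of_continuous
        (continuous_posPart_rpow h.contDiff.continuous (by linarith))) fun x ↦ by positivity)
      (caccioppoliConst_pos (by linarith) hC₁ hC₂).le

lemma mul_setIntegral_posPart_rpow_le (h : IsSubsolution μ p C₁ C₂ V c u) (hp : 1 < p)
    (hC₁ : 0 < C₁) (hC₂ : 0 < C₂) (ha : 0 ≤ a) (hc : AbsorbedOn μ p (C₁ / 4) a (ball x₀ r) c u)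
    (hs : 1 < s) (hη : IsCutoff L x₀ r η) :
    a * ∫ x in ball x₀ (r / 2), (u x)⁺ ^ s ∂μ ≤
      caccioppoliConst p C₁ C₂ * ((L / r) ^ p * ∫ x in ball x₀ r, (u x)⁺ ^ (s + p - 1) ∂μ) := by
  have hint : Integrable (fun x ↦ (u x)⁺ ^ s * η x ^ p) μ :=
    ((continuous_posPart_rpow h.contDiff.continuous (by linarith)).mul
      (hη.contDiff_rpow hp.le).continuous).integrable_of_hasCompactSupport
        (hasCompactSupport_rpow (by linarith) hη.hasCompactSupport).mul_left
  have hgrad : 0 ≤ ∫ x, ‖fderiv ℝ u x‖ ^ p * (u x)⁺ ^ (s - 1) * η x ^ p ∂μ :=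
    integral_nonneg fun x ↦ mul_nonneg (by positivity) (Real.rpow_nonneg (hη.nonneg x) p)
  have hcaccioppoli := h.caccioppoli_cutoff hp hC₁ hC₂ hc hs hη
  have hhalf := mul_le_mul_of_nonneg_left (hη.setIntegral_le hint fun x ↦ by positivity) ha
  linarith [mul_nonneg hC₁.le hgrad]

lemma integral_norm_fderiv_posPart_rpow_mul_le (h : IsSubsolution μ p C₁ C₂ V c u) (hp : 1 < p)
    (hC₁ : 0 < C₁) (hC₂ : 0 < C₂) (ha : 0 ≤ a) (hc : AbsorbedOn μ p (C₁ / 4) a (ball x₀ r) c u)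
    (hpt : p < t) (hr : 0 < r) (hL : 0 < L) (hη : IsCutoff L x₀ r η) :
    ∫ x, ‖fderiv ℝ (fun x ↦ (u x)⁺ ^ t * η x ^ p) x‖ ∂μ ≤
      cutoffGradientConst p C₁ C₂ L t * (r⁻¹ * ∫ x in ball x₀ r, (u x)⁺ ^ t ∂μ) := by
  set I := ∫ x in ball x₀ r, (u x)⁺ ^ t ∂μ with hI
  set J := ∫ x, ‖fderiv ℝ u x‖ ^ p * (u x)⁺ ^ (t - p) * η x ^ p ∂μ with hJ
  have hηp := hη.contDiff_rpow hp.le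
  have hJint := h.integrable_norm_fderiv_rpow_mul (μ := μ) (r := p) (t := t - p) (by linarith)
    (by linarith) hηp.continuous (hasCompactSupport_rpow (by linarith) hη.hasCompactSupport)
  have hIint : Integrable ((ball x₀ r).indicator fun x ↦ (u x)⁺ ^ t) μ :=
    (integrableOn_ball_of_continuous (continuous_posPart_rpow h.contDiff.continuous
      (by linarith))).integrable_indicator measurableSet_ball
  have hsplit : ∫ x, ‖fderiv ℝ (fun x ↦ (u x)⁺ ^ t * η x ^ p) x‖ ∂μ ≤
      t * r ^ (p - 1) * J + (t + p * L) / r * I := by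
    rw [hI, hJ, ← integral_indicator measurableSet_ball, ← integral_const_mul,
      ← integral_const_mul, ← integral_add (hJint.const_mul _) (hIint.const_mul _)]
    exact integral_mono_of_nonneg (Eventually.of_forall fun x ↦ norm_nonneg _)
      ((hJint.const_mul _).add (hIint.const_mul _)) (Eventually.of_forall fun x ↦
        hη.norm_fderiv_posPart_rpow_mul_le hr hp hpt.le h.contDiff x)
  have henergy : J ≤ 4 / C₁ * (caccioppoliConst p C₁ C₂ * ((L / r) ^ p * I)) := by
    have hcaccioppoli := h.caccioppoli_cutoff hp hC₁ hC₂ hc (s := t - p + 1) (by linarith) hη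
    rw [add_sub_cancel_right, (by ring : t - p + 1 + p - 1 = t)] at hcaccioppoli
    have hsink : 0 ≤ a * ∫ x, (u x)⁺ ^ (t - p + 1) * η x ^ p ∂μ := mul_nonneg ha <|
      integral_nonneg fun x ↦ mul_nonneg (by positivity) (Real.rpow_nonneg (hη.nonneg x) p)
    rw [div_mul_eq_mul_div, le_div_iff₀ hC₁]
    linarith
  refine hsplit.trans ?_
  calc t * r ^ (p - 1) * J + (t + p * L) / r * I
      ≤ t * r ^ (p - 1) * (4 / C₁ * (caccioppoliConst p C₁ C₂ * ((L / r) ^ p * I)))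
          + (t + p * L) / r * I := by
        have ht : 0 < t := by linarith
        gcongr
    _ = cutoffGradientConst p C₁ C₂ L t * (r⁻¹ * I) := by
        rw [Real.div_rpow hL.le hr.le, rpow_eq_rpow_sub_one_mul hr.le (by linarith : p ≠ 0),
          cutoffGradientConst]
        field_simp

variable (μ) in
lemma exists_setIntegral_rpow_mul_conjExponent_le (hE : 2 ≤ Module.finrank ℝ E) (hp : 1 < p)
    (hC₁ : 0 < C₁) (hC₂ : 0 < C₂) (hpt : p < t) :
    ∃ K > 0, ∀ {V : E → E} {c u : E → ℝ} {a r : ℝ} {x₀ : E}, IsSubsolution μ p C₁ C₂ V c u →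
      0 ≤ a → 0 < r → AbsorbedOn μ p (C₁ / 4) a (ball x₀ r) c u →
      ∫ x in ball x₀ (r / 2), (u x)⁺ ^ (t * Real.conjExponent (Module.finrank ℝ E)) ∂μ ≤
        K * (r⁻¹ * ∫ x in ball x₀ r, (u x)⁺ ^ t ∂μ) ^
          Real.conjExponent (Module.finrank ℝ E) := by
  obtain ⟨L, hL, hcutoff⟩ := exists_isCutoff E
  obtain ⟨K, hK, hsobolev⟩ := exists_integral_norm_rpow_le_integral_norm_fderiv_rpow μ ℝ hE
  set κ : ℝ := Real.conjExponent (Module.finrank ℝ E)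
  have hκ : 0 < κ := (Real.HolderConjugate.conjExponent (by exact_mod_cast hE)).symm.pos
  have ht : 0 < t := by linarith
  have hQ : 0 < cutoffGradientConst p C₁ C₂ L t := by
    have := caccioppoliConst_pos (by linarith : 0 < p) hC₁ hC₂
    unfold cutoffGradientConst
    positivity
  refine ⟨K * cutoffGradientConst p C₁ C₂ L t ^ κ, by positivity,
    fun {V c u a r x₀} h ha hr hc ↦ ?_⟩
  obtain ⟨η, hη⟩ := hcutoff x₀ r hr
  have hη0 := hη.nonneg
  set F : E → ℝ := fun x ↦ (u x)⁺ ^ t * η x ^ p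
  have hF : ContDiff ℝ 1 F :=
    ((contDiff_posPart_rpow (by linarith)).comp h.contDiff).mul (hη.contDiff_rpow hp.le)
  have hFc : HasCompactSupport F :=
    (hasCompactSupport_rpow (by linarith) hη.hasCompactSupport).mul_left
  have hFκ : ∀ x, ‖F x‖ ^ κ = (u x)⁺ ^ (t * κ) * η x ^ (p * κ) := fun x ↦ by
    have := hη0 x
    rw [Real.norm_of_nonneg (by positivity), Real.mul_rpow (by positivity) (by positivity),
      ← Real.rpow_mul (posPart_nonneg _), ← Real.rpow_mul this]
  have hint : Integrable (fun x ↦ ‖F x‖ ^ κ) μ :=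
    (hF.continuous.norm.rpow_const fun _ ↦ Or.inr hκ.le).integrable_of_hasCompactSupport
      (hasCompactSupport_rpow hκ.ne' hFc.norm)
  have : 0 ≤ ∫ x in ball x₀ r, (u x)⁺ ^ t ∂μ := integral_nonneg fun x ↦ by positivity
  calc ∫ x in ball x₀ (r / 2), (u x)⁺ ^ (t * κ) ∂μ
      ≤ ∫ x, ‖F x‖ ^ κ ∂μ := by
        simp only [hFκ] at hint ⊢
        exact hη.setIntegral_le hint fun x ↦ by positivity
    _ ≤ K * (∫ x, ‖fderiv ℝ F x‖ ∂μ) ^ κ := hsobolev F hF hFc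
    _ ≤ K * (cutoffGradientConst p C₁ C₂ L t * (r⁻¹ * ∫ x in ball x₀ r, (u x)⁺ ^ t ∂μ)) ^ κ := by
        gcongr
        exact h.integral_norm_fderiv_posPart_rpow_mul_le hp hC₁ hC₂ ha hc hpt hr hL hη
    _ = _ := by rw [Real.mul_rpow hQ.le (by positivity), mul_assoc]

end IsSubsolution

end BallEstimates

section Nondegeneracy

open Topology

variable {p a s t r : ℝ}

lemma rpow_le_rpow_add_mul_rpow {w Y : ℝ} (hw : 0 ≤ w) (hY : 0 < Y) (hs : 0 ≤ s) (hst : s ≤ t) :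
    w ^ s ≤ Y ^ s + Y ^ (s - t) * w ^ t := by
  rcases le_total w Y with hwY | hYw
  · have hmono : w ^ s ≤ Y ^ s := by gcongr
    exact hmono.trans (le_add_of_nonneg_right (by positivity))
  · have hw0 : 0 < w := hY.trans_le hYw
    calc w ^ s = w ^ (s - t) * w ^ t := by rw [← Real.rpow_add hw0, sub_add_cancel]
      _ ≤ Y ^ (s - t) * w ^ t := by
          gcongr ?_ * _
          exact Real.rpow_le_rpow_of_nonpos hY hYw (by linarith)
      _ ≤ Y ^ s + Y ^ (s - t) * w ^ t := le_add_of_nonneg_left (by positivity)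

/-- The natural size of `u` on a ball of radius `r` when `div A(x, Du) ≥ a`: up to a factor, the
radial profile `(a rᵖ)^(1 / (p - 1))` solves `Δₚ v = a`. -/
def growthScale (a p r : ℝ) : ℝ := (a * r ^ p) ^ (1 / (p - 1))

lemma growthScale_pos (ha : 0 < a) (hr : 0 < r) : 0 < growthScale a p r := by
  unfold growthScale
  positivity

lemma growthScale_rpow (hp : 1 < p) (ha : 0 ≤ a) (hr : 0 ≤ r) :
    growthScale a p r ^ (p - 1) = a * r ^ p := by
  rw [growthScale, ← Real.rpow_mul (by positivity), one_div_mul_cancel (by linarith), Real.rpow_one]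

lemma growthScale_div {ρ : ℝ} (ha : 0 ≤ a) (hr : 0 ≤ r) (hρ : 0 ≤ ρ) :
    growthScale a p (r / ρ) = growthScale a p r / (ρ ^ p) ^ (1 / (p - 1)) := by
  rw [growthScale, Real.div_rpow hr hρ, ← mul_div_assoc, Real.div_rpow (by positivity)
    (by positivity), growthScale]

lemma tendsto_growthScale_nhdsWithin_zero (hp : 1 < p) :
    Tendsto (growthScale a p) (𝓝[>] 0) (𝓝 0) := by
  have hpow : Tendsto (fun r : ℝ ↦ a * r ^ p) (𝓝[>] 0) (𝓝 0) := by
    have := ((Real.continuous_rpow_const (by linarith : 0 ≤ p)).const_mul a).tendsto 0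
    simp only [Real.zero_rpow (by linarith : p ≠ 0), mul_zero] at this
    exact this.mono_left nhdsWithin_le_nhds
  have hexp : 0 < 1 / (p - 1) := one_div_pos.2 (by linarith)
  have hscale := hpow.rpow_const (p := 1 / (p - 1)) (Or.inr hexp.le)
  rwa [Real.zero_rpow hexp.ne'] at hscale

lemma measureReal_ball_pos {X : Type*} [PseudoMetricSpace X] [ProperSpace X] [MeasurableSpace X]
    (μ : Measure X) [μ.IsOpenPosMeasure] [IsFiniteMeasureOnCompacts μ] (x : X) (hr : 0 < r) :
    0 < μ.real (ball x r) :=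
  ENNReal.toReal_pos (measure_ball_pos μ x hr).ne' measure_ball_lt_top.ne

variable {E : Type*} [NormedAddCommGroup E] [NormedSpace ℝ E] [FiniteDimensional ℝ E]
  [MeasurableSpace E] [BorelSpace E] {μ : Measure E} [μ.IsAddHaarMeasure] {C₁ C₂ : ℝ} {x₀ : E}
  {V : E → E} {c u : E → ℝ}

lemma measureReal_ball_eq_pow_finrank_mul (x₀ : E) (hr : 0 < r) :
    μ.real (ball x₀ r) = r ^ Module.finrank ℝ E * μ.real (ball 0 1) := by
  rw [Measure.real, Measure.addHaar_ball_of_pos μ x₀ hr, ENNReal.toReal_mul,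
    ENNReal.toReal_ofReal (by positivity), Measure.real]

lemma nonpos_of_setIntegral_ball_le {ι : Type*} {l : Filter ι} [l.NeBot] {f : E → ℝ}
    {ρ y : ι → ℝ} (hf : Continuous f) (hρ : Tendsto ρ l (𝓝[>] 0)) (hy : Tendsto y l (𝓝 0))
    (hle : ∀ i, ∫ x in ball x₀ (ρ i), f x ∂μ ≤ ρ i ^ Module.finrank ℝ E * y i) : f x₀ ≤ 0 := by
  by_contra! hpos
  obtain ⟨δ, hδ, hball⟩ := Metric.eventually_nhds_iff_ball.1
    (hf.continuousAt.eventually (lt_mem_nhds (half_lt_self hpos)))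
  have hlower : ∀ᶠ i in l, μ.real (ball (0 : E) 1) * (f x₀ / 2) ≤ y i := by
    filter_upwards [hρ.eventually (Ioo_mem_nhdsGT hδ)] with i hi
    have hmono : ∫ _ in ball x₀ (ρ i), f x₀ / 2 ∂μ ≤ ∫ x in ball x₀ (ρ i), f x ∂μ :=
      setIntegral_mono_on (integrableOn_const measure_ball_lt_top.ne)
        (integrableOn_ball_of_continuous hf) measurableSet_ball
        fun x hx ↦ (hball x (ball_subset_ball hi.2.le hx)).le
    rw [setIntegral_const, smul_eq_mul, measureReal_ball_eq_pow_finrank_mul x₀ hi.1,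
      mul_assoc] at hmono
    exact le_of_mul_le_mul_left (hmono.trans (hle i)) (pow_pos hi.1 _)
  have hlimit := ge_of_tendsto hy hlower
  have := mul_pos (measureReal_ball_pos μ (0 : E) one_pos) (half_pos hpos)
  linarith

lemma add_sub_one_le_mul_conjExponent {n σ : ℝ} (hn : 1 < n) (hσ : (n - 1) * (p - 1) ≤ σ) :
    σ + p - 1 ≤ σ * Real.conjExponent n := by
  have hn' : 0 < n - 1 := by linarith
  have hconj : σ * Real.conjExponent n = σ + σ / (n - 1) := by
    rw [Real.conjExponent]
    field_simp
    ring
  linarith [(le_div_iff₀' hn').2 hσ]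

lemma inv_mul_pow_mul_rpow_rpow_conjExponent {n : ℕ} {Y σ : ℝ} (hn : 1 < n) (hr : 0 ≤ r)
    (hY : 0 ≤ Y) : (r⁻¹ * (r ^ n * Y ^ σ)) ^ Real.conjExponent n =
      r ^ n * Y ^ (σ * Real.conjExponent n) := by
  have hn' : (1 : ℝ) < n := by exact_mod_cast hn
  have hbase : r⁻¹ * (r ^ n * Y ^ σ) = r ^ ((n : ℝ) - 1) * Y ^ σ := by
    rw [← mul_assoc, ← Real.rpow_natCast, Real.rpow_sub_one' hr (by linarith), inv_mul_eq_div]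
  rw [hbase, Real.mul_rpow (by positivity) (by positivity), ← Real.rpow_mul hr,
    ← Real.rpow_mul hY, Real.conjExponent, mul_div_cancel₀ _ (by linarith), Real.rpow_natCast]

lemma setIntegral_posPart_rpow_le_of_le {K Y : ℝ} (hu : Continuous u) (hY : 0 < Y) (hr : 0 < r)
    (hs : 0 ≤ s) (hst : s ≤ t)
    (hint : ∫ x in ball x₀ r, (u x)⁺ ^ t ∂μ ≤ K * (r ^ Module.finrank ℝ E * Y ^ t)) :
    ∫ x in ball x₀ r, (u x)⁺ ^ s ∂μ ≤
      (μ.real (ball 0 1) + K) * (r ^ Module.finrank ℝ E * Y ^ s) := by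
  have hintegrable : ∀ {e : ℝ}, 0 ≤ e → IntegrableOn (fun x ↦ (u x)⁺ ^ e) (ball x₀ r) μ :=
    fun he ↦ integrableOn_ball_of_continuous (continuous_posPart_rpow hu he)
  have hconst : IntegrableOn (fun _ : E ↦ Y ^ s) (ball x₀ r) μ :=
    integrableOn_const measure_ball_lt_top.ne
  have htop : IntegrableOn (fun x ↦ Y ^ (s - t) * (u x)⁺ ^ t) (ball x₀ r) μ :=
    (hintegrable (hs.trans hst)).const_mul _
  calc ∫ x in ball x₀ r, (u x)⁺ ^ s ∂μ
      ≤ ∫ x in ball x₀ r, (Y ^ s + Y ^ (s - t) * (u x)⁺ ^ t) ∂μ :=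
        setIntegral_mono (hintegrable hs) (hconst.add htop) fun x ↦
          rpow_le_rpow_add_mul_rpow (posPart_nonneg _) hY hs hst
    _ = r ^ Module.finrank ℝ E * μ.real (ball 0 1) * Y ^ s
          + Y ^ (s - t) * ∫ x in ball x₀ r, (u x)⁺ ^ t ∂μ := by
        rw [integral_add hconst.integrable htop, integral_const_mul, setIntegral_const, smul_eq_mul,
          measureReal_ball_eq_pow_finrank_mul x₀ hr]
    _ ≤ r ^ Module.finrank ℝ E * μ.real (ball 0 1) * Y ^ s
          + Y ^ (s - t) * (K * (r ^ Module.finrank ℝ E * Y ^ t)) := by gcongr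
    _ = (μ.real (ball 0 1) + K) * (r ^ Module.finrank ℝ E * Y ^ s) := by
        rw [Real.rpow_sub hY]
        field_simp

lemma setIntegral_posPart_rpow_le_of_mul_le {m Y : ℝ} (hu : Continuous u) (hs : 0 < s)
    (hr : 0 < r) (hm0 : 0 ≤ m) (hm : ∀ x ∈ ball x₀ r, u x ≤ m)
    (hmY : μ.real (ball (0 : E) 1) ^ (1 / s) * m ≤ Y) :
    ∫ x in ball x₀ r, (u x)⁺ ^ s ∂μ ≤ r ^ Module.finrank ℝ E * Y ^ s := by
  calc ∫ x in ball x₀ r, (u x)⁺ ^ s ∂μ ≤ ∫ _ in ball x₀ r, m ^ s ∂μ :=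
        setIntegral_mono_on (integrableOn_ball_of_continuous (continuous_posPart_rpow hu hs.le))
          (integrableOn_const measure_ball_lt_top.ne) measurableSet_ball fun x hx ↦
            Real.rpow_le_rpow (posPart_nonneg _) (sup_le (hm x hx) hm0) hs.le
    _ = r ^ Module.finrank ℝ E * (μ.real (ball (0 : E) 1) ^ (1 / s) * m) ^ s := by
        rw [setIntegral_const, smul_eq_mul, measureReal_ball_eq_pow_finrank_mul x₀ hr, mul_assoc,
          Real.mul_rpow (by positivity) hm0, ← Real.rpow_mul measureReal_nonneg,
          one_div_mul_cancel hs.ne', Real.rpow_one]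
    _ ≤ r ^ Module.finrank ℝ E * Y ^ s := by gcongr

lemma tendsto_div_four_pow_nhdsGT_zero {R : ℝ} (hR : 0 < R) :
    Tendsto (fun j : ℕ ↦ R / 4 ^ j) atTop (𝓝[>] 0) :=
  tendsto_nhdsWithin_iff.2 ⟨tendsto_const_nhds.div_atTop
    (tendsto_pow_atTop_atTop_of_one_lt (by norm_num)), Eventually.of_forall fun j ↦
      mem_Ioi.2 (by positivity)⟩

namespace IsSubsolution

variable (μ) in
lemma exists_mul_setIntegral_ball_div_four_le {σ : ℝ} (hE : 2 ≤ Module.finrank ℝ E) (hp : 1 < p)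
    (hC₁ : 0 < C₁) (hC₂ : 0 < C₂) (hpσ : p < σ)
    (hσ : ((Module.finrank ℝ E : ℝ) - 1) * (p - 1) ≤ σ) :
    ∃ K > 0, ∀ {V : E → E} {c u : E → ℝ} {a r Y : ℝ} {x₀ : E}, IsSubsolution μ p C₁ C₂ V c u →
      0 ≤ a → 0 < r → 0 < Y → AbsorbedOn μ p (C₁ / 4) a (ball x₀ r) c u →
      ∫ x in ball x₀ r, (u x)⁺ ^ σ ∂μ ≤ r ^ Module.finrank ℝ E * Y ^ σ →
      a * ∫ x in ball x₀ (r / 4), (u x)⁺ ^ σ ∂μ ≤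
        K * (r ^ Module.finrank ℝ E / r ^ p * Y ^ (σ + p - 1)) := by
  obtain ⟨L, hL, hcutoff⟩ := exists_isCutoff E
  obtain ⟨K₁, hK₁, hsobolev⟩ := exists_setIntegral_rpow_mul_conjExponent_le μ hE hp hC₁ hC₂ hpσ
  set n := Module.finrank ℝ E
  set κ : ℝ := Real.conjExponent n
  have hn : (1 : ℝ) < n := by exact_mod_cast hE
  have hκ : 0 < κ := (Real.HolderConjugate.conjExponent hn).symm.pos
  have hK₂ := caccioppoliConst_pos (by linarith : 0 < p) hC₁ hC₂
  have hV := measureReal_ball_pos μ (0 : E) one_pos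
  refine ⟨caccioppoliConst p C₁ C₂ * (2 * L) ^ p * (μ.real (ball 0 1) + 2 ^ n * K₁),
    by positivity, fun {V c u a r Y x₀} h ha hr hY hc hI ↦ ?_⟩
  have hhigh : ∫ x in ball x₀ (r / 2), (u x)⁺ ^ (σ * κ) ∂μ ≤
      2 ^ n * K₁ * ((r / 2) ^ n * Y ^ (σ * κ)) := by
    calc ∫ x in ball x₀ (r / 2), (u x)⁺ ^ (σ * κ) ∂μ
        ≤ K₁ * (r⁻¹ * ∫ x in ball x₀ r, (u x)⁺ ^ σ ∂μ) ^ κ := hsobolev h ha hr hc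
      _ ≤ K₁ * (r⁻¹ * (r ^ n * Y ^ σ)) ^ κ := by
          have : 0 ≤ ∫ x in ball x₀ r, (u x)⁺ ^ σ ∂μ := integral_nonneg fun x ↦ by positivity
          gcongr
      _ = K₁ * (r ^ n * Y ^ (σ * κ)) := by
          rw [inv_mul_pow_mul_rpow_rpow_conjExponent (by exact_mod_cast hE) hr.le hY.le]
      _ = _ := by rw [div_pow]; field_simp
  have hmid := setIntegral_posPart_rpow_le_of_le h.contDiff.continuous hY (half_pos hr)
    (by linarith : 0 ≤ σ + p - 1) (add_sub_one_le_mul_conjExponent hn hσ) hhigh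
  obtain ⟨η, hη⟩ := hcutoff x₀ (r / 2) (half_pos hr)
  have hlow := h.mul_setIntegral_posPart_rpow_le hp hC₁ hC₂ ha (s := σ)
    (hc.mono (ball_subset_ball (half_le_self hr.le))) (by linarith) hη
  rw [div_div, (by norm_num : (2 : ℝ) * 2 = 4), (by field_simp : L / (r / 2) = 2 * L / r)] at hlow
  calc a * ∫ x in ball x₀ (r / 4), (u x)⁺ ^ σ ∂μ
      ≤ caccioppoliConst p C₁ C₂ * ((2 * L / r) ^ p *
          ((μ.real (ball 0 1) + 2 ^ n * K₁) * (r ^ n * Y ^ (σ + p - 1)))) := by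
        refine hlow.trans ?_
        gcongr
        refine hmid.trans ?_
        gcongr
        linarith
    _ = _ := by rw [Real.div_rpow (by positivity) hr.le]; field_simp

variable (μ) in
lemma exists_decay_ball_div_four {σ : ℝ} (hE : 2 ≤ Module.finrank ℝ E) (hp : 1 < p)
    (hC₁ : 0 < C₁) (hC₂ : 0 < C₂) (hpσ : p < σ)
    (hσ : ((Module.finrank ℝ E : ℝ) - 1) * (p - 1) ≤ σ) :
    ∃ ε > 0, ∀ {V : E → E} {c u : E → ℝ} {a r : ℝ} {x₀ : E}, IsSubsolution μ p C₁ C₂ V c u →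
      0 < a → 0 < r → AbsorbedOn μ p (C₁ / 4) a (ball x₀ r) c u →
      ∫ x in ball x₀ r, (u x)⁺ ^ σ ∂μ ≤
        r ^ Module.finrank ℝ E * (ε * growthScale a p r) ^ σ →
      ∫ x in ball x₀ (r / 4), (u x)⁺ ^ σ ∂μ ≤
        (r / 4) ^ Module.finrank ℝ E * (ε * growthScale a p (r / 4)) ^ σ := by
  obtain ⟨K, hK, hstep⟩ := exists_mul_setIntegral_ball_div_four_le μ hE hp hC₁ hC₂ hpσ hσ
  set n := Module.finrank ℝ E
  set d : ℝ := (4 ^ p) ^ (1 / (p - 1)) with hd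
  have hd0 : 0 < d := by positivity
  set ε : ℝ := (1 / (d ^ σ * 4 ^ n * K)) ^ (1 / (p - 1)) with hε
  have hε0 : 0 < ε := by positivity
  have hεpow : ε ^ (p - 1) = 1 / (d ^ σ * 4 ^ n * K) := by
    rw [hε, ← Real.rpow_mul (by positivity), one_div_mul_cancel (by linarith), Real.rpow_one]
  refine ⟨ε, hε0, fun {V c u a r x₀} h ha hr hc hI ↦ ?_⟩
  have hS := growthScale_pos (p := p) ha hr
  have hYpow : (ε * growthScale a p r) ^ (σ + p - 1) =
      (ε * growthScale a p r) ^ σ * (1 / (d ^ σ * 4 ^ n * K) * (a * r ^ p)) := by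
    rw [add_sub_assoc, Real.rpow_add (by positivity), Real.mul_rpow (z := p - 1) hε0.le hS.le,
      growthScale_rpow hp ha.le hr.le, hεpow]
  have hquarter := hstep h ha.le hr (by positivity) hc hI
  rw [hYpow] at hquarter
  refine le_of_mul_le_mul_left (hquarter.trans_eq ?_) ha
  rw [growthScale_div ha.le hr.le (by norm_num), ← hd, ← mul_div_assoc,
    Real.div_rpow (by positivity) hd0.le, div_pow]
  field_simp

variable (μ) in
theorem exists_growthScale_lt (hE : 2 ≤ Module.finrank ℝ E) (hp : 1 < p) (hC₁ : 0 < C₁)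
    (hC₂ : 0 < C₂) :
    ∃ ε > 0, ∀ {V : E → E} {c u : E → ℝ} {a R m : ℝ} {x₀ : E}, IsSubsolution μ p C₁ C₂ V c u →
      0 < a → 0 < R → AbsorbedOn μ p (C₁ / 4) a (ball x₀ R) c u → (∀ x ∈ ball x₀ R, u x ≤ m) →
      0 < u x₀ → ε * growthScale a p R < m := by
  set n := Module.finrank ℝ E
  set σ : ℝ := (n - 1) * (p - 1) + 1 + p
  have hn2 : (2 : ℝ) ≤ n := by exact_mod_cast hE
  have hpσ : p < σ := by nlinarith
  have hσ0 : 0 < σ := by linarith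
  obtain ⟨ε, hε, hdecay⟩ := exists_decay_ball_div_four μ hE hp hC₁ hC₂ hpσ (by linarith)
  have hball : 0 < μ.real (ball (0 : E) 1) := measureReal_ball_pos μ 0 one_pos
  refine ⟨ε / μ.real (ball (0 : E) 1) ^ (1 / σ), by positivity,
    fun {V c u a R m x₀} h ha hR hc hm hx₀ ↦ ?_⟩
  by_contra! hsmall
  have hm0 : 0 < m := hx₀.trans_le (hm x₀ (mem_ball_self hR))
  have hcont : Continuous fun x ↦ (u x)⁺ ^ σ :=
    continuous_posPart_rpow h.contDiff.continuous hσ0.le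
  have hstart : ∫ x in ball x₀ R, (u x)⁺ ^ σ ∂μ ≤ R ^ n * (ε * growthScale a p R) ^ σ := by
    rw [div_mul_eq_mul_div, le_div_iff₀' (by positivity)] at hsmall
    exact setIntegral_posPart_rpow_le_of_mul_le h.contDiff.continuous hσ0 hR hm0.le hm hsmall
  have hiterate : ∀ j : ℕ, ∫ x in ball x₀ (R / 4 ^ j), (u x)⁺ ^ σ ∂μ ≤
      (R / 4 ^ j) ^ n * (ε * growthScale a p (R / 4 ^ j)) ^ σ := by
    intro j
    induction j with
    | zero => simpa only [pow_zero, div_one] using hstart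
    | succ j ih =>
      rw [pow_succ, ← div_div]
      exact hdecay h ha (by positivity) (hc.mono (ball_subset_ball
        (div_le_self hR.le (one_le_pow₀ (by norm_num))))) ih
  have hradius := tendsto_div_four_pow_nhdsGT_zero hR
  have hscale : Tendsto (fun j : ℕ ↦ (ε * growthScale a p (R / 4 ^ j)) ^ σ) atTop (𝓝 0) := by
    have hlim := (tendsto_growthScale_nhdsWithin_zero (a := a) hp).comp hradius
    have := (hlim.const_mul ε).rpow_const (p := σ) (Or.inr hσ0.le)
    rwa [mul_zero, Real.zero_rpow hσ0.ne'] at this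
  have hnonpos := nonpos_of_setIntegral_ball_le hcont hradius hscale hiterate
  have := posPart_pos hx₀
  exact hnonpos.not_gt (by positivity)

end IsSubsolution

end Nondegeneracy

section Drift

variable {p a r α β κ m ε D w : ℝ}

lemma growthScale_const_mul {k : ℝ} (hk : 0 ≤ k) (ha : 0 ≤ a) (hr : 0 ≤ r) :
    growthScale (k * a) p r = k ^ (1 / (p - 1)) * growthScale a p r := by
  rw [growthScale, mul_assoc, Real.mul_rpow hk (by positivity), growthScale]

lemma growthScale_mul_rpow_le (hp : 1 < p) (hα : 0 < α) (ha : 0 < a) (hβ : 0 ≤ β) (hr : 0 ≤ r)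
    (hsmall : r * a ^ ((α - p + 1) / α) * β ^ ((p - 1) / α) ≤ 1) :
    growthScale a p r * β ^ (p / α) ≤ a ^ ((p - α) / α) := by
  have hp' : 0 < p - 1 := by linarith
  have hsplit : a ^ (1 / (p - 1)) =
      a ^ ((p - α) / α) * a ^ ((α - p + 1) / α * (p / (p - 1))) := by
    rw [← Real.rpow_add ha]
    congr 1
    field_simp
    ring
  have hβexp : β ^ (p / α) = β ^ ((p - 1) / α * (p / (p - 1))) := by
    congr 1
    field_simp
  calc growthScale a p r * β ^ (p / α)
      = a ^ ((p - α) / α) *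
          (r * a ^ ((α - p + 1) / α) * β ^ ((p - 1) / α)) ^ (p / (p - 1)) := by
        rw [growthScale, Real.mul_rpow ha.le (by positivity), hsplit, hβexp,
          Real.mul_rpow (by positivity) (by positivity), Real.mul_rpow hr (by positivity),
          ← Real.rpow_mul hr, ← Real.rpow_mul ha.le, ← Real.rpow_mul hβ, mul_one_div]
        ring
    _ ≤ a ^ ((p - α) / α) * 1 := by
        gcongr
        exact Real.rpow_le_one (by positivity) hsmall (by positivity)
    _ = a ^ ((p - α) / α) := mul_one _

lemma mul_le_mul_rpow_sub (hα : 0 < α) (hαp : α ≤ p) (ha : 0 ≤ a) (hβ : 0 < β) (hD : 0 ≤ D)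
    (hε : 0 ≤ ε) (hεκ : ε * 2 ^ ((p - α) / α) ≤ κ) (hm : m * β ^ (p / α) ≤ ε * a ^ ((p - α) / α))
    (haD : a ≤ 2 * (β * D ^ α)) : β * m ≤ κ * D ^ (p - α) := by
  have : 0 ≤ (p - α) / α := div_nonneg (by linarith) hα.le
  have hβpow : β ^ (p / α) = β ^ ((p - α) / α) * β := by
    rw [← Real.rpow_add_one hβ.ne']
    congr 1
    field_simp
    ring
  have hDpow : (2 * (β * D ^ α)) ^ ((p - α) / α) =
      2 ^ ((p - α) / α) * (β ^ ((p - α) / α) * D ^ (p - α)) := by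
    rw [Real.mul_rpow (by norm_num) (by positivity), Real.mul_rpow hβ.le (by positivity),
      ← Real.rpow_mul hD, mul_div_cancel₀ _ hα.ne']
  refine le_of_mul_le_mul_left ?_ (by positivity : 0 < β ^ ((p - α) / α))
  calc β ^ ((p - α) / α) * (β * m) = m * β ^ (p / α) := by rw [hβpow]; ring
    _ ≤ ε * (2 * (β * D ^ α)) ^ ((p - α) / α) := hm.trans (by gcongr)
    _ = (ε * 2 ^ ((p - α) / α)) * (β ^ ((p - α) / α) * D ^ (p - α)) := by rw [hDpow]; ring
    _ ≤ κ * (β ^ ((p - α) / α) * D ^ (p - α)) := by gcongr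
    _ = β ^ ((p - α) / α) * (κ * D ^ (p - α)) := by ring

-- Either the drift is dominated by half of the source, or the gradient is so large that the
-- smallness of `m` lets the `p`-energy absorb the drift.
lemma drift_mul_le (hα : 0 < α) (hαp : α ≤ p) (ha : 0 ≤ a) (hD : 0 ≤ D) (hε : 0 ≤ ε)
    (hεκ : ε * 2 ^ ((p - α) / α) ≤ κ) (hm : m * β ^ (p / α) ≤ ε * a ^ ((p - α) / α)) (hw : 0 ≤ w)
    (hwm : w ≤ m) : β * D ^ α * w ≤ a / 2 * w + κ * D ^ p := by
  have hκ : 0 ≤ κ := le_trans (by positivity) hεκ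
  rcases le_or_gt (β * D ^ α) (a / 2) with hsmall | hlarge
  · calc β * D ^ α * w ≤ a / 2 * w := by gcongr
      _ ≤ a / 2 * w + κ * D ^ p := le_add_of_nonneg_right (by positivity)
  · have hβD : 0 < β * D ^ α := (by positivity : 0 ≤ a / 2).trans_lt hlarge
    have hβ0 : 0 < β := pos_of_mul_pos_left hβD (by positivity)
    have hpow : D ^ p = D ^ α * D ^ (p - α) := by
      rw [← Real.rpow_add_of_nonneg hD hα.le (by linarith), add_sub_cancel]
    calc β * D ^ α * w ≤ β * D ^ α * m := by gcongr
      _ = D ^ α * (β * m) := by ring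
      _ ≤ D ^ α * (κ * D ^ (p - α)) := by
          refine mul_le_mul_of_nonneg_left ?_ (by positivity)
          exact mul_le_mul_rpow_sub hα hαp ha hβ0 hD hε hεκ hm (by linarith)
      _ = κ * D ^ p := by rw [hpow]; ring
      _ ≤ a / 2 * w + κ * D ^ p := le_add_of_nonneg_left (by positivity)

variable {E : Type*} [NormedAddCommGroup E] [NormedSpace ℝ E] [MeasurableSpace E]
  {μ : Measure E} {C₁ C₂ : ℝ} {S : Set E} {V : E → E} {c u : E → ℝ}

lemma AbsorbedOn.of_le_drift_sub (hp : 1 < p) (hα : 0 < α) (hαp : α ≤ p) (ha : 0 < a)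
    (hβ : 0 ≤ β) (hr : 0 ≤ r) (hε : 0 ≤ ε) (hεκ : ε * 2 ^ ((p - α) / α) ≤ κ)
    (hsmall : r * a ^ ((α - p + 1) / α) * β ^ ((p - 1) / α) ≤ 1)
    (hc : ∀ᵐ x ∂μ, x ∈ S → 0 < u x → c x ≤ β * ‖fderiv ℝ u x‖ ^ α - a)
    (hm : m ≤ ε * growthScale a p r) (hum : ∀ x ∈ S, u x ≤ m) :
    AbsorbedOn μ p κ (a / 2) S c u := by
  have hmβ : m * β ^ (p / α) ≤ ε * a ^ ((p - α) / α) := by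
    calc m * β ^ (p / α) ≤ ε * (growthScale a p r * β ^ (p / α)) := by
          rw [← mul_assoc]
          gcongr
      _ ≤ ε * a ^ ((p - α) / α) := by
          gcongr
          exact growthScale_mul_rpow_le hp hα ha hβ hr hsmall
  filter_upwards [hc] with x hx hxS hux
  have hdrift := drift_mul_le hα hαp ha.le (norm_nonneg (fderiv ℝ u x)) hε hεκ hmβ hux.le
    (hum x hxS)
  calc (c x + a / 2) * u x ≤ (β * ‖fderiv ℝ u x‖ ^ α - a + a / 2) * u x := by
        gcongr
        exact hx hxS hux
    _ ≤ κ * ‖fderiv ℝ u x‖ ^ p := by linarith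

variable [FiniteDimensional ℝ E] [BorelSpace E]

variable (μ) in
theorem IsSubsolution.exists_growthScale_lt_of_drift [μ.IsAddHaarMeasure]
    (hE : 2 ≤ Module.finrank ℝ E) (hp : 1 < p) (hC₁ : 0 < C₁) (hC₂ : 0 < C₂) (hα : 0 < α)
    (hαp : α ≤ p) :
    ∃ ε > 0, ∀ {V : E → E} {c u : E → ℝ} {a β R m : ℝ} {x₀ : E}, IsSubsolution μ p C₁ C₂ V c u →
      0 < a → 0 ≤ β → 0 < R → R * a ^ ((α - p + 1) / α) * β ^ ((p - 1) / α) ≤ 1 →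
      (∀ᵐ x ∂μ, x ∈ ball x₀ R → 0 < u x → c x ≤ β * ‖fderiv ℝ u x‖ ^ α - a) →
      (∀ x ∈ ball x₀ R, u x ≤ m) → 0 < u x₀ → ε * growthScale a p R < m := by
  obtain ⟨ε₀, hε₀, hgrowth⟩ := exists_growthScale_lt μ hE hp hC₁ hC₂
  set ε₁ : ℝ := C₁ / 4 / 2 ^ ((p - α) / α) with hε₁
  have hε₁C : ε₁ * 2 ^ ((p - α) / α) ≤ C₁ / 4 := by
    rw [hε₁, div_mul_cancel₀ _ (by positivity)]
  refine ⟨min ε₁ (ε₀ * (1 / 2) ^ (1 / (p - 1))), by positivity,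
    fun {V c u a β R m x₀} h ha hβ hR hsmall hc hum hx₀ ↦ ?_⟩
  by_contra! hm
  have hS := growthScale_pos (p := p) ha hR
  have habs : AbsorbedOn μ p (C₁ / 4) (a / 2) (ball x₀ R) c u :=
    .of_le_drift_sub hp hα hαp ha hβ hR.le (by positivity) hε₁C hsmall hc
      (hm.trans (by gcongr; exact min_le_left _ _)) hum
  refine (hgrowth h (half_pos ha) hR habs hum hx₀).not_ge (hm.trans ?_)
  rw [(by ring : a / 2 = 1 / 2 * a), growthScale_const_mul (by norm_num) ha.le hR.le, ← mul_assoc]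
  gcongr
  exact min_le_right _ _

end Drift

section MaximumPrinciple

open Topology Manifold

lemma setIntegral_le_rpow_integral_rpow_mul {X : Type*} [MeasurableSpace X] {μ : Measure X}
    {κ ν : ℝ} (hκ : κ.HolderConjugate ν) {f : X → ℝ} (hf0 : ∀ x, 0 ≤ f x)
    (hf : MemLp f (ENNReal.ofReal κ) μ) {S : Set X} (hS : μ S ≠ ∞) :
    ∫ x in S, f x ∂μ ≤ (∫ x, f x ^ κ ∂μ) ^ (1 / κ) * μ.real S ^ (1 / ν) := by
  have : Fact (μ S < ∞) := ⟨hS.lt_top⟩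
  have hfκ : Integrable (fun x ↦ f x ^ κ) μ := by
    have := hf.integrable_norm_rpow (by simpa using hκ.pos) ENNReal.ofReal_ne_top
    simpa only [ENNReal.toReal_ofReal hκ.nonneg, Real.norm_of_nonneg (hf0 _)] using this
  have hholder := integral_mul_le_Lp_mul_Lq_of_nonneg hκ (μ := μ.restrict S)
    (Eventually.of_forall hf0) (Eventually.of_forall fun _ ↦ zero_le_one) (hf.restrict S)
    (memLp_const (1 : ℝ))
  simp only [mul_one, Real.one_rpow, setIntegral_const, smul_eq_mul] at hholder
  refine hholder.trans ?_
  have : ∫ x in S, f x ^ κ ∂μ ≤ ∫ x, f x ^ κ ∂μ :=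
    setIntegral_le_integral hfκ (Eventually.of_forall fun x ↦ Real.rpow_nonneg (hf0 x) κ)
  have : 0 ≤ ∫ x in S, f x ^ κ ∂μ := integral_nonneg fun x ↦ Real.rpow_nonneg (hf0 x) κ
  have := one_div_nonneg.2 hκ.nonneg
  gcongr

variable {E : Type*} [NormedAddCommGroup E] [NormedSpace ℝ E]
  {p C₁ C₂ Λ k M m : ℝ} {U S : Set E} {V : E → E} {c u χ : E → ℝ}

/-- The part of the superlevel set `{x ∈ U | k < u x}` on which `Du ≠ 0`; the truncation
`(u - k)⁺` has its gradient supported there. -/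
def noncriticalSuperlevel (u : E → ℝ) (U : Set E) (k : ℝ) : Set E :=
  {x ∈ U | k < u x ∧ fderiv ℝ u x ≠ 0}

lemma noncriticalSuperlevel_sub_const :
    noncriticalSuperlevel (fun x ↦ u x - k) U 0 = noncriticalSuperlevel u U k := by
  simp only [noncriticalSuperlevel, sub_pos, fderiv_sub_const]

lemma isOpen_noncriticalSuperlevel (hU : IsOpen U) (hu : ContDiff ℝ 1 u) :
    IsOpen (noncriticalSuperlevel u U k) :=
  hU.inter ((isOpen_lt continuous_const hu.continuous).inter
    (isOpen_ne.preimage (hu.continuous_fderiv one_ne_zero)))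

lemma norm_fderiv_posPart_rpow_mul_le_noncriticalSuperlevel (hp : 1 ≤ p) (hu : ContDiff ℝ 1 u)
    (hχ : ContDiff ℝ 1 χ) (hχ0 : ∀ x, 0 ≤ χ x) (hχU : Function.support χ ⊆ U)
    (hflat : ∀ x, 0 < u x → fderiv ℝ χ x = 0) (x : E) :
    ‖fderiv ℝ (fun x ↦ (u x)⁺ ^ (p + 1) * χ x) x‖ ≤
      (p + 1) * (‖fderiv ℝ u x‖ ^ p * (u x)⁺ * χ x) + (p + 1) *
        (noncriticalSuperlevel u U 0).indicator (fun x ↦ (u x)⁺ ^ (p + 1) * χ x) x := by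
  have hnonneg : 0 ≤ (p + 1) * (‖fderiv ℝ u x‖ ^ p * (u x)⁺ * χ x) + (p + 1) *
      (noncriticalSuperlevel u U 0).indicator (fun x ↦ (u x)⁺ ^ (p + 1) * χ x) x := by
    have := hχ0 x
    have := indicator_nonneg (s := noncriticalSuperlevel u U 0)
      (fun x _ ↦ mul_nonneg (Real.rpow_nonneg (posPart_nonneg (u x)) (p + 1)) (hχ0 x)) x
    positivity
  have hzero : (u x)⁺ ^ (p + 1) • fderiv ℝ χ x = 0 := by
    rcases le_or_gt (u x) 0 with hux | hux
    · rw [posPart_of_nonpos hux, Real.zero_rpow (by linarith), zero_smul]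
    · rw [hflat x hux, smul_zero]
  rw [fderiv_posPart_rpow_mul (by linarith) (hu.differentiable one_ne_zero x)
    (hχ.differentiable one_ne_zero x), hzero, zero_add, add_sub_cancel_right, norm_smul, norm_smul,
    Real.norm_of_nonneg (hχ0 x), Real.norm_of_nonneg (by positivity)]
  by_cases hxT : x ∈ noncriticalSuperlevel u U 0
  · rw [indicator_of_mem hxT]
    have hyoung := mul_le_mul_of_nonneg_right (rpow_sub_one_mul_le_add hp one_pos
      (posPart_nonneg (u x)) (norm_nonneg (fderiv ℝ u x)))
      (mul_nonneg (posPart_nonneg (u x)) (hχ0 x))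
    rw [inv_one, Real.one_rpow] at hyoung
    have hsucc : (u x)⁺ ^ (p + 1) = (u x)⁺ ^ p * (u x)⁺ := by
      rw [Real.rpow_add_of_nonneg (posPart_nonneg _) (by linarith) zero_le_one, Real.rpow_one]
    rw [rpow_eq_rpow_sub_one_mul (posPart_nonneg (u x)) (by linarith : p ≠ 0)] at hsucc hyoung ⊢
    rw [hsucc]
    linear_combination (p + 1) * hyoung
  · suffices hzero : χ x * ((p + 1) * (u x)⁺ ^ p * ‖fderiv ℝ u x‖) = 0 from hzero.trans_le hnonneg
    by_contra hne
    simp only [mul_eq_zero, norm_eq_zero, not_or] at hne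
    refine hxT ⟨hχU hne.1, not_le.1 fun hux ↦ hne.2.1.2 ?_, hne.2.2⟩
    rw [posPart_of_nonpos hux, Real.zero_rpow (by linarith)]

lemma mul_rpow_sub_one_mul_sq_le (hp : 1 ≤ p) (hC₁ : 0 < C₁) (hΛ : 0 ≤ Λ) {D w : ℝ} (hD : 0 ≤ D)
    (hw : 0 ≤ w) :
    Λ * D ^ (p - 1) * w ^ (2 : ℝ) ≤
      C₁ * (D ^ p * w) + C₁⁻¹ ^ (p - 1) * Λ ^ p * w ^ (p + 1) := by
  have hyoung := mul_le_mul_of_nonneg_right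
    (rpow_sub_one_mul_le_add hp hC₁ hD (mul_nonneg hΛ hw)) hw
  rw [Real.mul_rpow hΛ hw] at hyoung
  rw [Real.rpow_two, Real.rpow_add_of_nonneg hw (by linarith) zero_le_one, Real.rpow_one]
  linear_combination hyoung

lemma mul_sq_mul_le_indicator_noncriticalSuperlevel (hp : 1 < p) (hC₁ : 0 < C₁) (hΛ : 0 ≤ Λ)
    {x : E} (hχ0 : 0 ≤ χ x) (hχU : χ x ≠ 0 → x ∈ U)
    (hc : x ∈ U → 0 < u x → c x ≤ Λ * ‖fderiv ℝ u x‖ ^ (p - 1)) :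
    c x * ((u x)⁺ ^ (2 : ℝ) * χ x) ≤
      C₁ * (‖fderiv ℝ u x‖ ^ p * (u x)⁺ * χ x) + C₁⁻¹ ^ (p - 1) * Λ ^ p *
        (noncriticalSuperlevel u U 0).indicator (fun y ↦ (u y)⁺ ^ (p + 1) * χ y) x := by
  have hindicator : 0 ≤ (noncriticalSuperlevel u U 0).indicator
      (fun y ↦ (u y)⁺ ^ (p + 1) * χ y) x :=
    indicator_apply_nonneg fun _ ↦ mul_nonneg (by positivity) hχ0
  have hright : 0 ≤ C₁⁻¹ ^ (p - 1) * Λ ^ p *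
      (noncriticalSuperlevel u U 0).indicator (fun y ↦ (u y)⁺ ^ (p + 1) * χ y) x := by
    positivity
  rcases le_or_gt (u x) 0 with hux | hux
  · simpa [posPart_of_nonpos hux] using hright
  by_cases hχx : χ x = 0
  · simpa [hχx] using hright
  have hcx := mul_le_mul_of_nonneg_right (hc (hχU hχx) hux)
    (mul_nonneg (Real.rpow_nonneg hux.le 2) hχ0)
  rw [posPart_of_nonneg hux.le]
  by_cases hDu : fderiv ℝ u x = 0
  · refine hcx.trans ?_
    simpa [hDu, Real.zero_rpow (by linarith : p ≠ 0), Real.zero_rpow (by linarith : p - 1 ≠ 0)]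
      using hright
  · have hxT : x ∈ noncriticalSuperlevel u U 0 := ⟨hχU hχx, hux, hDu⟩
    have hyoung := mul_le_mul_of_nonneg_right (mul_rpow_sub_one_mul_sq_le hp.le hC₁ hΛ
      (norm_nonneg (fderiv ℝ u x)) hux.le) hχ0
    simp only [indicator_of_mem hxT, posPart_of_nonneg hux.le]
    linear_combination hcx + hyoung

variable [MeasurableSpace E] [BorelSpace E] {μ : Measure E}

-- An interior maximum is a critical point, so these sets shrink to `∅`.
lemma tendsto_measure_noncriticalSuperlevel (hU : IsOpen U) (hμU : μ U ≠ ∞)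
    (hu : ContDiff ℝ 1 u) (hum : ∀ x ∈ U, u x ≤ m) :
    Tendsto (fun ε ↦ μ (noncriticalSuperlevel u U (m - ε))) (𝓝[>] 0) (𝓝 0) := by
  have hempty : ⋂ ε > (0 : ℝ), noncriticalSuperlevel u U (m - ε) = ∅ := by
    refine eq_empty_of_forall_notMem fun x hx ↦ ?_
    simp only [mem_iInter] at hx
    obtain ⟨hxU, -, hDu⟩ := hx 1 one_pos
    refine hDu (IsLocalMax.fderiv_eq_zero ?_)
    filter_upwards [hU.mem_nhds hxU] with y hy
    exact (hum y hy).trans (le_of_forall_pos_lt_add fun ε hε ↦ sub_lt_iff_lt_add.1 (hx ε hε).2.1)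
  rw [← measure_empty (μ := μ), ← hempty]
  refine tendsto_measure_biInter_gt
    (fun ε _ ↦ (isOpen_noncriticalSuperlevel hU hu).measurableSet.nullMeasurableSet)
    (fun ε δ _ hεδ x hx ↦ ⟨hx.1, (sub_le_sub_left hεδ m).trans_lt hx.2.1, hx.2.2⟩)
    ⟨1, one_pos, measure_ne_top_of_subset (sep_subset _ _) hμU⟩

variable [FiniteDimensional ℝ E]

omit [MeasurableSpace E] [BorelSpace E] in
lemma exists_contDiff_eventuallyEq_one (hS : IsCompact S) (hU : IsOpen U) (hSU : S ⊆ U) :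
    ∃ χ : E → ℝ, ContDiff ℝ 1 χ ∧ HasCompactSupport χ ∧ Function.support χ ⊆ U ∧
      (∀ x, 0 ≤ χ x) ∧ ∀ x ∈ S, χ =ᶠ[𝓝 x] 1 := by
  obtain ⟨L, hL, hSL, hLU⟩ := exists_compact_between hS hU hSU
  obtain ⟨χ, hχ1, hχ0, hχ⟩ :=
    exists_contMDiffMap_one_nhds_of_subset_interior (n := 1) 𝓘(ℝ, E) hS.isClosed hSL
  have hsupp : Function.support χ ⊆ L := Function.support_subset_iff'.2 hχ0
  exact ⟨χ, χ.contMDiff.contDiff, .of_support_subset_isCompact hL hsupp, hsupp.trans hLU,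
    fun x ↦ (hχ x).1, fun x hx ↦ hχ1.filter_mono (nhds_le_nhdsSet hx)⟩

omit [MeasurableSpace E] [BorelSpace E] in
lemma exists_cutoff_superlevel (hu : Continuous u) (hU : IsOpen U) (hUb : Bornology.IsBounded U)
    (hM : ∀ x ∈ frontier U, u x ≤ M) (hMk : M < k) :
    ∃ χ : E → ℝ, ContDiff ℝ 1 χ ∧ HasCompactSupport χ ∧ Function.support χ ⊆ U ∧ (∀ x, 0 ≤ χ x) ∧
      (∀ x ∈ closure U, k ≤ u x → χ x = 1) ∧ ∀ x, k ≤ u x → fderiv ℝ χ x = 0 := by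
  have hS : IsCompact (closure U ∩ {x | k ≤ u x}) :=
    hUb.isCompact_closure.inter_right (isClosed_le continuous_const hu)
  have hSU : closure U ∩ {x | k ≤ u x} ⊆ U := fun x hx ↦ by
    by_contra hxU
    exact ((hM x ⟨hx.1, fun hxint ↦ hxU (interior_subset hxint)⟩).trans_lt hMk).not_ge hx.2
  obtain ⟨χ, hχ, hχc, hχU, hχ0, hχ1⟩ := exists_contDiff_eventuallyEq_one hS hU hSU
  refine ⟨χ, hχ, hχc, hχU, hχ0, fun x hxU hkx ↦ (hχ1 x ⟨hxU, hkx⟩).eq_of_nhds, fun x hkx ↦ ?_⟩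
  by_cases hxU : x ∈ closure U
  · rw [(hχ1 x ⟨hxU, hkx⟩).fderiv_eq, fderiv_one, Pi.zero_apply]
  · exact fderiv_of_notMem_tsupport ℝ fun hx ↦ hxU (closure_mono hχU hx)

variable [μ.IsAddHaarMeasure]

variable (μ) in
lemma exists_eq_zero_of_integral_norm_fderiv_le (hE : 2 ≤ Module.finrank ℝ E) {C : ℝ}
    (hC : 0 < C) :
    ∃ δ > 0, ∀ {F : E → ℝ} {S : Set E}, ContDiff ℝ 1 F → HasCompactSupport F → (∀ x, 0 ≤ F x) →
      μ S ≠ ∞ → μ.real S ≤ δ → ∫ x, ‖fderiv ℝ F x‖ ∂μ ≤ C * ∫ x in S, F x ∂μ → F = 0 := by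
  obtain ⟨K, hK, hsobolev⟩ := exists_integral_norm_rpow_le_integral_norm_fderiv_rpow μ ℝ hE
  have hE' : (1 : ℝ) < Module.finrank ℝ E := by exact_mod_cast hE
  have hconj := (Real.HolderConjugate.conjExponent hE').symm
  set ν : ℝ := (Module.finrank ℝ E : ℝ)
  set κ : ℝ := ν.conjExponent
  have hκ : 0 < κ := hconj.pos
  have hν : 0 < ν := hconj.symm.pos
  refine ⟨(2 * (K ^ (1 / κ) * C))⁻¹ ^ ν, by positivity, fun {F S} hF hFc hF0 hS hSδ hDF ↦ ?_⟩
  set I := ∫ x in S, F x ∂μ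
  have hI : 0 ≤ I := integral_nonneg hF0
  have hFκ : ∫ x, F x ^ κ ∂μ ≤ K * (C * I) ^ κ := by
    have := hsobolev F hF hFc
    simp only [Real.norm_of_nonneg (hF0 _)] at this
    refine this.trans ?_
    have : 0 ≤ ∫ x, ‖fderiv ℝ F x‖ ∂μ := integral_nonneg fun _ ↦ norm_nonneg _
    gcongr
  have hFκ0 : 0 ≤ ∫ x, F x ^ κ ∂μ := integral_nonneg fun x ↦ Real.rpow_nonneg (hF0 x) κ
  have hhalf : I ≤ I / 2 := by
    calc I ≤ (∫ x, F x ^ κ ∂μ) ^ (1 / κ) * μ.real S ^ (1 / ν) :=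
          setIntegral_le_rpow_integral_rpow_mul hconj hF0
            (hF.continuous.memLp_of_hasCompactSupport hFc) hS
      _ ≤ (K * (C * I) ^ κ) ^ (1 / κ) * ((2 * (K ^ (1 / κ) * C))⁻¹ ^ ν) ^ (1 / ν) := by gcongr
      _ = K ^ (1 / κ) * (C * I) * (2 * (K ^ (1 / κ) * C))⁻¹ := by
          rw [Real.mul_rpow hK.le (by positivity), one_div, one_div,
            Real.rpow_rpow_inv (by positivity) hκ.ne', Real.rpow_rpow_inv (by positivity) hν.ne']
      _ = I / 2 := by field_simp
  have hI0 : I = 0 := by linarith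
  rw [hI0, mul_zero, Real.zero_rpow hκ.ne', mul_zero] at hFκ
  by_contra hne
  obtain ⟨x, hx⟩ := Function.ne_iff.1 hne
  refine hFκ.not_gt (Continuous.integral_pos_of_hasCompactSupport_nonneg_nonzero (x := x)
    (hF.continuous.rpow_const fun _ ↦ Or.inr hκ.le) (hasCompactSupport_rpow hκ.ne' hFc)
    (fun x ↦ Real.rpow_nonneg (hF0 x) κ) ?_)
  exact (Real.rpow_pos_of_pos ((hF0 x).lt_of_ne' hx) κ).ne'

namespace IsSubsolution

lemma integral_norm_fderiv_rpow_mul_le_noncriticalSuperlevel (h : IsSubsolution μ p C₁ C₂ V c u)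
    (hp : 1 < p) (hC₁ : 0 < C₁) (hΛ : 0 ≤ Λ) (hU : IsOpen U) (hχ : ContDiff ℝ 1 χ)
    (hχc : HasCompactSupport χ) (hχ0 : ∀ x, 0 ≤ χ x) (hχU : Function.support χ ⊆ U)
    (hflat : ∀ x, 0 < u x → fderiv ℝ χ x = 0)
    (hc : ∀ᵐ x ∂μ, x ∈ U → 0 < u x → c x ≤ Λ * ‖fderiv ℝ u x‖ ^ (p - 1)) :
    C₁ * ∫ x, ‖fderiv ℝ u x‖ ^ p * (u x)⁺ * χ x ∂μ ≤
      C₁⁻¹ ^ (p - 1) * Λ ^ p *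
        ∫ x in noncriticalSuperlevel u U 0, (u x)⁺ ^ (p + 1) * χ x ∂μ := by
  set T := noncriticalSuperlevel u U 0
  set F : E → ℝ := fun x ↦ (u x)⁺ ^ (p + 1) * χ x
  set B : ℝ := C₁⁻¹ ^ (p - 1) * Λ ^ p
  have hT : MeasurableSet T := (isOpen_noncriticalSuperlevel hU h.contDiff).measurableSet
  have hcont : ∀ {s : ℝ}, 0 ≤ s → Continuous fun x ↦ (u x)⁺ ^ s * χ x := fun hs ↦
    (continuous_posPart_rpow h.contDiff.continuous hs).mul hχ.continuous
  have hF : Integrable F μ :=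
    (hcont (by linarith)).integrable_of_hasCompactSupport hχc.mul_left
  have hP : Integrable (fun x ↦ ‖fderiv ℝ u x‖ ^ p * (u x)⁺ * χ x) μ := by
    simpa using h.integrable_norm_fderiv_rpow_mul (μ := μ) (r := p) (t := 1) (by linarith)
      zero_le_one hχ.continuous hχc
  have herr : ∀ x, ‖fderiv ℝ u x‖ ^ (p - 1) * (u x)⁺ ^ (2 : ℝ) * ‖fderiv ℝ χ x‖ = 0 := fun x ↦ by
    rcases le_or_gt (u x) 0 with hux | hux
    · simp [posPart_of_nonpos hux]
    · simp [hflat x hux]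
  have hlower := integral_mono_ae
    (h.locallyIntegrable_lower.integrable_smul_right_of_hasCompactSupport
      (hcont zero_le_two) hχc.mul_left)
    ((hP.const_mul C₁).add ((hF.indicator hT).const_mul B)) (hc.mono fun x hx ↦
      mul_sq_mul_le_indicator_noncriticalSuperlevel hp hC₁ hΛ (hχ0 x) (@hχU x) hx)
  have henergy := h.energy_le hp.le one_lt_two hχ hχc hχ0
  simp only [smul_eq_mul, Pi.add_apply] at hlower
  rw [integral_add (hP.const_mul C₁) ((hF.indicator hT).const_mul B), integral_const_mul,
    integral_const_mul, integral_indicator hT] at hlower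
  simp only [herr, integral_zero, mul_zero, add_zero, (by norm_num : (2 : ℝ) - 1 = 1),
    Real.rpow_one] at henergy
  linarith

lemma integral_norm_fderiv_le_setIntegral_noncriticalSuperlevel (h : IsSubsolution μ p C₁ C₂ V c u)
    (hp : 1 < p) (hC₁ : 0 < C₁) (hΛ : 0 ≤ Λ) (hU : IsOpen U) (hχ : ContDiff ℝ 1 χ)
    (hχc : HasCompactSupport χ) (hχ0 : ∀ x, 0 ≤ χ x) (hχU : Function.support χ ⊆ U)
    (hflat : ∀ x, 0 < u x → fderiv ℝ χ x = 0)
    (hc : ∀ᵐ x ∂μ, x ∈ U → 0 < u x → c x ≤ Λ * ‖fderiv ℝ u x‖ ^ (p - 1)) :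
    ∫ x, ‖fderiv ℝ (fun x ↦ (u x)⁺ ^ (p + 1) * χ x) x‖ ∂μ ≤
      (p + 1) * (C₁⁻¹ ^ (p - 1) * Λ ^ p / C₁ + 1) *
        ∫ x in noncriticalSuperlevel u U 0, (u x)⁺ ^ (p + 1) * χ x ∂μ := by
  have hT : MeasurableSet (noncriticalSuperlevel u U 0) :=
    (isOpen_noncriticalSuperlevel hU h.contDiff).measurableSet
  have hF : Integrable (fun x ↦ (u x)⁺ ^ (p + 1) * χ x) μ :=
    ((continuous_posPart_rpow h.contDiff.continuous (by linarith)).mul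
      hχ.continuous).integrable_of_hasCompactSupport hχc.mul_left
  have hP : Integrable (fun x ↦ ‖fderiv ℝ u x‖ ^ p * (u x)⁺ * χ x) μ := by
    simpa using h.integrable_norm_fderiv_rpow_mul (μ := μ) (r := p) (t := 1) (by linarith)
      zero_le_one hχ.continuous hχc
  have hgrad := integral_mono_of_nonneg (μ := μ) (Eventually.of_forall fun x ↦ norm_nonneg _)
    ((hP.const_mul (p + 1)).add ((hF.indicator hT).const_mul (p + 1))) (Eventually.of_forall
      (norm_fderiv_posPart_rpow_mul_le_noncriticalSuperlevel hp.le h.contDiff hχ hχ0 hχU hflat))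
  simp only [Pi.add_apply] at hgrad
  rw [integral_add (hP.const_mul _) ((hF.indicator hT).const_mul _), integral_const_mul,
    integral_const_mul, integral_indicator hT] at hgrad
  have henergy := (le_div_iff₀' hC₁).2
    (h.integral_norm_fderiv_rpow_mul_le_noncriticalSuperlevel hp hC₁ hΛ hU hχ hχc hχ0 hχU hflat hc)
  linear_combination hgrad + (p + 1) * henergy

theorem le_of_le_on_frontier (hE : 2 ≤ Module.finrank ℝ E) (h : IsSubsolution μ p C₁ C₂ V c u)
    (hp : 1 < p) (hC₁ : 0 < C₁) (hΛ : 0 ≤ Λ) (hU : IsOpen U) (hUb : Bornology.IsBounded U)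
    (hM : ∀ x ∈ frontier U, u x ≤ M)
    (hc : ∀ᵐ x ∂μ, x ∈ U → M < u x → c x ≤ Λ * ‖fderiv ℝ u x‖ ^ (p - 1)) {x : E}
    (hx : x ∈ closure U) : u x ≤ M := by
  by_contra! hMx
  have hu := h.contDiff.continuous
  obtain ⟨y, hy, hymax⟩ := hUb.isCompact_closure.exists_isMaxOn ⟨x, hx⟩ hu.continuousOn
  obtain ⟨k₀, hMk₀, hk₀y⟩ := exists_between (hMx.trans_le (hymax hx))
  obtain ⟨χ, hχ, hχc, hχU, hχ0, hχ1, hflat⟩ := exists_cutoff_superlevel hu hU hUb hM hMk₀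
  obtain ⟨δ, hδ, hvanish⟩ := exists_eq_zero_of_integral_norm_fderiv_le μ hE
    (by positivity : 0 < (p + 1) * (C₁⁻¹ ^ (p - 1) * Λ ^ p / C₁ + 1))
  have hμU : μ U ≠ ∞ := hUb.measure_lt_top.ne
  obtain ⟨ε, hεδ, hε, hεk₀⟩ : ∃ ε, μ (noncriticalSuperlevel u U (u y - ε)) < ENNReal.ofReal δ ∧
      0 < ε ∧ ε < u y - k₀ :=
    (((tendsto_measure_noncriticalSuperlevel hU hμU h.contDiff fun z hz ↦
      hymax (subset_closure hz)).eventually_lt_const (ENNReal.ofReal_pos.2 hδ)).and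
        (Ioo_mem_nhdsGT (sub_pos.2 hk₀y))).exists
  set k := u y - ε
  have hgrad := (h.sub_const k).integral_norm_fderiv_le_setIntegral_noncriticalSuperlevel hp hC₁ hΛ
    hU hχ hχc hχ0 hχU (fun z hz ↦ hflat z (by linarith)) (by
      simp only [fderiv_sub_const]
      filter_upwards [hc] with z hz hzU hkz using hz hzU (by linarith))
  rw [noncriticalSuperlevel_sub_const] at hgrad
  have hF := congrFun (hvanish (((contDiff_posPart_rpow (by linarith)).comp
    (h.sub_const k).contDiff).mul hχ) hχc.mul_left
    (fun z ↦ mul_nonneg (Real.rpow_nonneg (posPart_nonneg _) _) (hχ0 z))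
    (measure_ne_top_of_subset (sep_subset _ _) hμU) (ENNReal.toReal_le_of_le_ofReal hδ.le hεδ.le)
    hgrad) y
  have hky : u y - k = ε := sub_sub_cancel _ _
  simp only [Function.comp_apply, hky, posPart_of_nonneg hε.le, hχ1 y hy hk₀y.le, mul_one,
    Pi.zero_apply] at hF
  exact (Real.rpow_pos_of_pos hε _).ne' hF

end IsSubsolution

end MaximumPrinciple

section SphericalMaximum

variable {n : ℕ} {u : Euc n → ℝ} {r : ℝ}

lemma le_sphMax (hu : Continuous u) (x : Euc n) : u x ≤ sphMax u ‖x‖ :=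
  le_csSup ((isCompact_sphere 0 ‖x‖).image hu).bddAbove ⟨x, by simp, rfl⟩

lemma exists_norm_eq_and_eq_sphMax (hn : n ≠ 0) (hu : Continuous u) (hr : 0 ≤ r) :
    ∃ x, ‖x‖ = r ∧ u x = sphMax u r := by
  have : Nonempty (Fin n) := ⟨⟨0, Nat.pos_of_ne_zero hn⟩⟩
  obtain ⟨y, hy⟩ := exists_norm_eq (Euc n) hr
  obtain ⟨x, hx, hux⟩ :=
    ((isCompact_sphere 0 r).image hu).sSup_mem ⟨u y, y, mem_sphere_zero_iff_norm.2 hy, rfl⟩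
  exact ⟨x, mem_sphere_zero_iff_norm.1 hx, hux⟩

lemma ann_subset_ann {r' s s' : ℝ} (hr : r' ≤ r) (hs : s ≤ s') : Ann n r s ⊆ Ann n r' s' :=
  fun _ hx ↦ ⟨hr.trans_lt hx.1, hx.2.trans_le hs⟩

lemma ball_subset_ann {x : Euc n} (hx : ‖x‖ = r) (δ : ℝ) : ball x δ ⊆ Ann n (r - δ) (r + δ) := by
  intro y hy
  have hxy := abs_le.1 (abs_norm_sub_norm_le y x)
  rw [mem_ball, dist_eq_norm] at hy
  exact ⟨by linarith, by linarith⟩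

lemma measurableSet_ann (s : ℝ) : MeasurableSet (Ann n r s) :=
  (measurableSet_lt measurable_const measurable_norm).inter
    (measurableSet_lt measurable_norm measurable_const)

end SphericalMaximum

section RadialGrowth

lemma exists_nat_le_and_le_one_add {W : ℝ} (hW : 0 ≤ W) :
    ∃ N : ℕ, 1 ≤ N ∧ W ≤ N ∧ (N : ℝ) ≤ 1 + W := by
  refine ⟨⌊W⌋₊ + 1, Nat.le_add_left 1 _, ?_, ?_⟩ <;> rw [Nat.cast_add_one]
  · exact (Nat.lt_floor_add_one W).le
  · linarith [Nat.floor_le hW]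

lemma growthScale_eq_mul {a r : ℝ} (hp : 1 < p) (ha : 0 ≤ a) (hr : 0 ≤ r) :
    growthScale a p r = r * (a * r) ^ (1 / (p - 1)) := by
  have hp₁ : p - 1 ≠ 0 := by linarith
  have hexp : p * (1 / (p - 1)) = 1 + 1 / (p - 1) := by
    field_simp
    ring
  rw [growthScale, Real.mul_rpow ha (by positivity), ← Real.rpow_mul hr, hexp,
    Real.rpow_one_add' hr (by positivity), Real.mul_rpow ha hr]
  ring

variable {n : ℕ} {p C₁ C₂ α : ℝ} {V : Euc n → Euc n} {b f u q : Euc n → ℝ}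

variable (p C₁ C₂ α V b f u) in
/-- `u` is a `C¹` weak solution of `div V + b‖Du‖ᵅ ≥ f` on `ℝⁿ`, where `b` and `f` are nonnegative
and `V` is a flux as in `IsSubsolution`. The source `f` may depend on `u`, as in `f = q g(u)`. -/
structure IsDriftSubsolution : Prop extends
    IsSubsolution volume p C₁ C₂ V (fun x ↦ b x * ‖fderiv ℝ u x‖ ^ α - f x) u where
  drift_nonneg : ∀ x, 0 ≤ b x
  drift_locBdd : LocBdd b
  source_nonneg : ∀ x, 0 ≤ f x

namespace IsDriftSubsolution

lemma exists_lower_le_mul_rpow (h : IsDriftSubsolution p C₁ C₂ α V b f u) (hp : 1 < p)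
    (hpα : p - 1 ≤ α) {K : Set (Euc n)} (hK : IsCompact K) :
    ∃ Λ, 0 ≤ Λ ∧ ∀ x ∈ K,
      b x * ‖fderiv ℝ u x‖ ^ α - f x ≤ Λ * ‖fderiv ℝ u x‖ ^ (p - 1) := by
  obtain ⟨β, hβ⟩ := h.drift_locBdd K hK
  obtain ⟨G, hG⟩ := hK.exists_bound_of_continuousOn
    (h.continuous_norm_fderiv_rpow (sub_nonneg.2 hpα)).continuousOn
  refine ⟨|β| * |G|, by positivity, fun x hx ↦ ?_⟩
  have hsplit : ‖fderiv ℝ u x‖ ^ α =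
      ‖fderiv ℝ u x‖ ^ (α - (p - 1)) * ‖fderiv ℝ u x‖ ^ (p - 1) := by
    rw [← Real.rpow_add_of_nonneg (norm_nonneg _) (sub_nonneg.2 hpα) (by linarith), sub_add_cancel]
  have hgrad : ‖fderiv ℝ u x‖ ^ (α - (p - 1)) ≤ |G| :=
    (le_abs_self _).trans <| (hG x hx).trans (le_abs_self G)
  have hdrift : b x ≤ |β| := (hβ x hx).trans (le_abs_self β)
  calc b x * ‖fderiv ℝ u x‖ ^ α - f x ≤ b x * ‖fderiv ℝ u x‖ ^ α :=
        sub_le_self _ (h.source_nonneg x)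
    _ = b x * ‖fderiv ℝ u x‖ ^ (α - (p - 1)) * ‖fderiv ℝ u x‖ ^ (p - 1) := by
        rw [hsplit, mul_assoc]
    _ ≤ |β| * |G| * ‖fderiv ℝ u x‖ ^ (p - 1) := by gcongr

theorem le_sphMax_of_norm_le (h : IsDriftSubsolution p C₁ C₂ α V b f u) (hn : 2 ≤ n) (hp : 1 < p)
    (hC₁ : 0 < C₁) (hpα : p - 1 ≤ α) {r : ℝ} (hr : 0 < r) {x : Euc n} (hx : ‖x‖ ≤ r) :
    u x ≤ sphMax u r := by
  obtain ⟨Λ, hΛ, hlower⟩ := h.exists_lower_le_mul_rpow hp hpα (isCompact_closedBall 0 r)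
  refine h.toIsSubsolution.le_of_le_on_frontier (by simpa using hn) hp hC₁ hΛ isOpen_ball
    isBounded_ball (fun y hy ↦ ?_) (.of_forall fun y hy _ ↦ hlower y (ball_subset_closedBall hy))
    (by rwa [closure_ball _ hr.ne', mem_closedBall_zero_iff])
  rw [frontier_ball _ hr.ne', mem_sphere_zero_iff_norm] at hy
  exact hy ▸ le_sphMax h.contDiff.continuous y

theorem sphMax_le_sphMax (h : IsDriftSubsolution p C₁ C₂ α V b f u) (hn : 2 ≤ n) (hp : 1 < p)
    (hC₁ : 0 < C₁) (hpα : p - 1 ≤ α) {r s : ℝ} (hr : 0 < r) (hrs : r ≤ s) :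
    sphMax u r ≤ sphMax u s := by
  obtain ⟨x, hx, hux⟩ :=
    exists_norm_eq_and_eq_sphMax (by omega) h.contDiff.continuous hr.le
  exact hux ▸ h.le_sphMax_of_norm_le hn hp hC₁ hpα (hr.trans_le hrs) (hx.trans_le hrs)

lemma exists_growthScale_le_sphMax_sub (hn : 2 ≤ n) (hp : 1 < p) (hC₁ : 0 < C₁) (hC₂ : 0 < C₂)
    (hpα : p - 1 ≤ α) (hαp : α ≤ p) :
    ∃ ε > 0, ∀ {V : Euc n → Euc n} {b f u : Euc n → ℝ} {a B k r δ : ℝ},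
      IsDriftSubsolution p C₁ C₂ α V b f u → 0 < a → 0 ≤ B → 0 < r → 0 < δ →
      δ * a ^ ((α - p + 1) / α) * B ≤ 1 →
      (∀ᵐ x, x ∈ Ann n (r - δ) (r + δ) → b x ^ ((p - 1) / α) ≤ B ∧ (k < u x → a ≤ f x)) →
      k < sphMax u r → ε * growthScale a p δ ≤ sphMax u (r + δ) - sphMax u r := by
  have hα : 0 < α := by linarith
  have hθ : 0 < (p - 1) / α := div_pos (by linarith) hα
  obtain ⟨ε, hε, hgrowth⟩ := IsSubsolution.exists_growthScale_lt_of_drift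
    (volume : Measure (Euc n)) (by simpa using hn) hp hC₁ hC₂ hα hαp
  refine ⟨ε, hε, fun {V b f u a B k r δ} h ha hB hr hδ hsmall hbf hk ↦ ?_⟩
  by_contra! hlt
  obtain ⟨x₀, hx₀, hux₀⟩ :=
    exists_norm_eq_and_eq_sphMax (by omega) h.contDiff.continuous hr.le
  obtain ⟨k', hk', hk'u⟩ := exists_between
    (max_lt hk (by linarith : sphMax u (r + δ) - ε * growthScale a p δ < sphMax u r))
  obtain ⟨hkk', hεk'⟩ := max_lt_iff.1 hk'
  have hball := ball_subset_ann hx₀ δ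
  refine (hgrowth (a := a) (x₀ := x₀) (m := sphMax u (r + δ) - k')
    (h.toIsSubsolution.sub_const k') ha (Real.rpow_nonneg hB ((p - 1) / α)⁻¹) hδ
    ?_ ?_ ?_ ?_).not_ge (by linarith)
  · rwa [Real.rpow_inv_rpow hB hθ.ne']
  · filter_upwards [hbf] with x hx hxball hux
    obtain ⟨hbx, hfx⟩ := hx (hball hxball)
    rw [← Real.le_rpow_inv_iff_of_pos (h.drift_nonneg x) hB hθ] at hbx
    rw [fderiv_sub_const]
    gcongr
    exact hfx (by linarith)
  · intro x hx
    have := h.le_sphMax_of_norm_le hn hp hC₁ hpα (by linarith) (hball hx).2.le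
    linarith
  · linarith

lemma exists_nat_mul_growthScale_le_sphMax_sub (hn : 2 ≤ n) (hp : 1 < p) (hC₁ : 0 < C₁)
    (hC₂ : 0 < C₂) (hpα : p - 1 ≤ α) (hαp : α ≤ p) :
    ∃ ε > 0, ∀ {V : Euc n → Euc n} {b f u : Euc n → ℝ} {a B k r δ : ℝ} (N : ℕ),
      IsDriftSubsolution p C₁ C₂ α V b f u → 0 < a → 0 ≤ B → 0 < r → 0 < δ →
      δ * a ^ ((α - p + 1) / α) * B ≤ 1 →
      (∀ᵐ x, x ∈ Ann n (r - δ) (r + N * δ) → b x ^ ((p - 1) / α) ≤ B ∧ (k < u x → a ≤ f x)) →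
      k < sphMax u r → N * (ε * growthScale a p δ) ≤ sphMax u (r + N * δ) - sphMax u r := by
  obtain ⟨ε, hε, hstep⟩ := exists_growthScale_le_sphMax_sub hn hp hC₁ hC₂ hpα hαp
  refine ⟨ε, hε, fun {V b f u a B k r δ} N h ha hB hr hδ hsmall hbf hk ↦ ?_⟩
  calc N * (ε * growthScale a p δ) = ∑ _i ∈ Finset.range N, ε * growthScale a p δ := by
        rw [Finset.sum_const, Finset.card_range, nsmul_eq_mul]
    _ ≤ ∑ i ∈ Finset.range N, (sphMax u (r + (i + 1 : ℕ) * δ) - sphMax u (r + i * δ)) := by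
        refine Finset.sum_le_sum fun i hi ↦ ?_
        have hiδ : 0 ≤ (i : ℝ) * δ := by positivity
        have hsucc : r + (i + 1 : ℕ) * δ = r + i * δ + δ := by
          rw [Nat.cast_add_one]
          ring
        have hle : r + (i + 1 : ℕ) * δ ≤ r + N * δ := by
          gcongr
          exact Finset.mem_range.1 hi
        rw [hsucc] at hle ⊢
        refine hstep h ha hB (by linarith) hδ hsmall ?_
          (hk.trans_le (h.sphMax_le_sphMax hn hp hC₁ hpα hr (by linarith)))
        filter_upwards [hbf] with x hx hxi
        exact hx (ann_subset_ann (by linarith) hle hxi)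
    _ = sphMax u (r + N * δ) - sphMax u r := by
        rw [Finset.sum_range_sub fun i : ℕ ↦ sphMax u (r + i * δ)]
        simp

theorem exists_mul_rpow_le_sphMax_sub (hn : 2 ≤ n) (hp : 1 < p) (hC₁ : 0 < C₁) (hC₂ : 0 < C₂)
    (hpα : p - 1 ≤ α) (hαp : α ≤ p) :
    ∃ ε > 0, ∀ {V : Euc n → Euc n} {b f u : Euc n → ℝ} {a B k r l : ℝ},
      IsDriftSubsolution p C₁ C₂ α V b f u → 0 < a → 0 ≤ B → 0 < r → 0 < l →
      (∀ᵐ x, x ∈ Ann n r (r + l) → b x ^ ((p - 1) / α) ≤ B ∧ (k < u x → a ≤ f x)) →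
      k < sphMax u r →
      ε * l * (a * l / (1 + l * a ^ ((α - p + 1) / α) * B)) ^ (1 / (p - 1)) ≤
        sphMax u (r + l) - sphMax u r := by
  obtain ⟨ε, hε, hsteps⟩ := exists_nat_mul_growthScale_le_sphMax_sub hn hp hC₁ hC₂ hpα hαp
  refine ⟨ε / 2 * (1 / 2) ^ (1 / (p - 1)), by positivity,
    fun {V b f u a B k r l} h ha hB hr hl hbf hk ↦ ?_⟩
  obtain ⟨N, hN, hWN, hNW⟩ :=
    exists_nat_le_and_le_one_add (by positivity : 0 ≤ l * a ^ ((α - p + 1) / α) * B)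
  have : 0 < p - 1 := sub_pos.2 hp
  -- Splitting the outer half of the annulus into `N ≈ 1 + l a^((α-p+1)/α) B` steps makes each of
  -- them short enough for the drift to be absorbed.
  set δ := l / (2 * N) with hδ
  have hNδ : N * δ = l / 2 := by
    rw [hδ]
    field_simp
  have hδl : δ ≤ l / 2 := hNδ ▸ le_mul_of_one_le_left (by positivity) (Nat.one_le_cast.2 hN)
  have hsmall : δ * a ^ ((α - p + 1) / α) * B ≤ 1 := by
    calc δ * a ^ ((α - p + 1) / α) * B = l * a ^ ((α - p + 1) / α) * B / (2 * N) := by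
          rw [hδ]
          ring
      _ ≤ 1 := div_le_one_of_le₀ (by linarith) (by positivity)
  have hend : r + l / 2 + N * δ = r + l := by
    rw [hNδ]
    ring
  have hgrowth := hsteps (r := r + l / 2) N h ha hB (by positivity) (by positivity) hsmall (by
      filter_upwards [hbf] with x hx hxi
      exact hx (ann_subset_ann (by linarith) hend.le hxi))
    (hk.trans_le (h.sphMax_le_sphMax hn hp hC₁ hpα hr (by linarith)))
  have hmono := h.sphMax_le_sphMax hn hp hC₁ hpα hr (by linarith : r ≤ r + l / 2)
  rw [hend, growthScale_eq_mul hp ha.le (by positivity)] at hgrowth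
  calc ε / 2 * (1 / 2) ^ (1 / (p - 1)) * l *
        (a * l / (1 + l * a ^ ((α - p + 1) / α) * B)) ^ (1 / (p - 1))
      ≤ ε / 2 * (1 / 2) ^ (1 / (p - 1)) * l * (a * l / N) ^ (1 / (p - 1)) := by gcongr
    _ = ε * (N * δ) * (1 / 2 * (a * l / N)) ^ (1 / (p - 1)) := by
        rw [hNδ, Real.mul_rpow (by positivity) (by positivity)]
        ring
    _ = N * (ε * (δ * (a * δ) ^ (1 / (p - 1)))) := by
        rw [(by rw [hδ]; field_simp : 1 / 2 * (a * l / N) = a * δ)]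
        ring
    _ ≤ sphMax u (r + l) - sphMax u r := by linarith

end IsDriftSubsolution

end RadialGrowth

section AnnularData

lemma essInf_nonneg_of_forall {X : Type*} [MeasurableSpace X] {μ : Measure X} {f : X → ℝ}
    (hf : ∀ x, 0 ≤ f x) : 0 ≤ essInf f μ :=
  Real.sSup_nonneg' ⟨0, mem_ofPred.2 (eventually_map.2 (.of_forall hf)), le_rfl⟩

lemma essSup_nonneg_of_forall {X : Type*} [MeasurableSpace X] {μ : Measure X} {f : X → ℝ}
    (hf : ∀ x, 0 ≤ f x) : 0 ≤ essSup f μ := by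
  rcases eq_or_ne μ 0 with rfl | hμ
  · simp [essSup, limsup, limsSup]
  · have := ae_neBot.2 hμ
    refine Real.sInf_nonneg fun c hc ↦ ?_
    obtain ⟨x, hx⟩ := (eventually_map.1 (mem_ofPred.1 hc)).exists
    exact (hf x).trans hx

variable {n : ℕ} {p C₁ C₂ α τ : ℝ} {V : Euc n → Euc n} {b f u q : Euc n → ℝ}

lemma ae_qinf_le (hq : ∀ x, 0 ≤ q x) (σ r : ℝ) :
    ∀ᵐ x, x ∈ Ann n (r / σ) (σ * r) → qinf q σ r ≤ q x := by
  rw [← ae_restrict_iff' (measurableSet_ann _)]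
  exact ae_essInf_le (isBoundedUnder_of ⟨0, hq⟩)

lemma ae_rpow_le_essSup_ann (hb : ∀ x, 0 ≤ b x) (hbb : LocBdd b) {θ : ℝ} (hθ : 0 ≤ θ) (r s : ℝ) :
    ∀ᵐ x, x ∈ Ann n r s → b x ^ θ ≤ essSup (fun x ↦ b x ^ θ) (volume.restrict (Ann n r s)) := by
  obtain ⟨β, hβ⟩ := hbb _ (isCompact_closedBall (0 : Euc n) s)
  rw [← ae_restrict_iff' (measurableSet_ann _)]
  refine ae_le_essSup ⟨β ^ θ, eventually_map.2 ((ae_restrict_iff' (measurableSet_ann _)).2 ?_)⟩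
  exact .of_forall fun x hx ↦
    Real.rpow_le_rpow (hb x) (hβ x (mem_closedBall_zero_iff.2 hx.2.le)) hθ

lemma mul_div_one_add_le {γ ω Q B ξ : ℝ} (hα : 0 < α) (hγ : 0 < γ) (hωγ : ω ≤ γ)
    (hωα : ω ≤ γ ^ ((p - 1) / α)) (hQ : 0 ≤ Q) (hB : 0 ≤ B) (hξ : 0 ≤ ξ) :
    ω * (Q / (1 + ξ * Q ^ ((α - p + 1) / α) * B)) ≤
      Q * γ / (1 + ξ * (Q * γ) ^ ((α - p + 1) / α) * B) := by
  have hpow : γ ^ ((p - 1) / α) * γ ^ ((α - p + 1) / α) = γ := by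
    rw [← Real.rpow_add hγ, ← add_div, (by ring : p - 1 + (α - p + 1) = α), div_self hα.ne',
      Real.rpow_one]
  rw [Real.mul_rpow hQ hγ.le, mul_div_assoc', div_le_div_iff₀ (by positivity) (by positivity)]
  set X := ξ * Q ^ ((α - p + 1) / α) * B with hX
  have : 0 ≤ X := by positivity
  have hωX : ω * γ ^ ((α - p + 1) / α) ≤ γ := by
    calc ω * γ ^ ((α - p + 1) / α) ≤ γ ^ ((p - 1) / α) * γ ^ ((α - p + 1) / α) := by gcongr
      _ = γ := hpow
  calc ω * Q * (1 + ξ * (Q ^ ((α - p + 1) / α) * γ ^ ((α - p + 1) / α)) * B)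
      = Q * ω + Q * X * (ω * γ ^ ((α - p + 1) / α)) := by rw [hX]; ring
    _ ≤ Q * γ + Q * X * γ := by gcongr
    _ = Q * γ * (1 + X) := by ring

lemma div_mul_div_one_add_le {c l ξ a X : ℝ} (hτ : 1 ≤ τ) (ha : 0 ≤ a) (hX : 0 ≤ X) (hξ : 0 < ξ)
    (hc : 0 < c) (hcl : c * ξ ≤ l) (hlτ : l ≤ τ * ξ) :
    c / τ * (ξ * (a / (1 + ξ * X))) ≤ a * l / (1 + l * X) := by
  have hl : 0 < l := (mul_pos hc hξ).trans_le hcl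
  calc c / τ * (ξ * (a / (1 + ξ * X))) = a * (c * ξ) / (τ * (1 + ξ * X)) := by field_simp
    _ ≤ a * l / (1 + l * X) := by
        gcongr
        nlinarith

lemma mul_rpow_mul_div_one_add_le {c m γ l ξ Q B : ℝ} (hp : 1 < p) (hα : 0 < α) (hτ : 1 ≤ τ)
    (hγ : 0 < γ) (hm : 0 ≤ m) (hmα : m ≤ γ ^ (1 / α)) (hmp : m ≤ γ ^ (1 / (p - 1))) (hQ : 0 ≤ Q)
    (hB : 0 ≤ B) (hξ : 0 < ξ) (hc : 0 < c) (hcl : c * ξ ≤ l) (hlτ : l ≤ τ * ξ) :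
    (c / τ) ^ (1 / (p - 1)) * m *
        (ξ * (Q / (1 + ξ * Q ^ ((α - p + 1) / α) * B))) ^ (1 / (p - 1)) ≤
      (Q * γ * l / (1 + l * (Q * γ) ^ ((α - p + 1) / α) * B)) ^ (1 / (p - 1)) := by
  have hp₁ : 0 < p - 1 := sub_pos.2 hp
  have : 0 < l := (mul_pos hc hξ).trans_le hcl
  have hωγ : m ^ (p - 1) ≤ γ := by
    calc m ^ (p - 1) ≤ (γ ^ (1 / (p - 1))) ^ (p - 1) := by gcongr
      _ = γ := by rw [one_div, Real.rpow_inv_rpow hγ.le hp₁.ne']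
  have hωα : m ^ (p - 1) ≤ γ ^ ((p - 1) / α) := by
    calc m ^ (p - 1) ≤ (γ ^ (1 / α)) ^ (p - 1) := by gcongr
      _ = γ ^ ((p - 1) / α) := by rw [← Real.rpow_mul hγ.le, one_div_mul_eq_div]
  have hweight := mul_div_one_add_le hα hγ hωγ hωα hQ hB hξ.le
  set f := Q / (1 + ξ * Q ^ ((α - p + 1) / α) * B) with hf
  have hf₀ : 0 ≤ f := by positivity
  rw [mul_assoc] at hweight
  have hbase : c / τ * (m ^ (p - 1) * (ξ * f)) ≤
      Q * γ * l / (1 + l * (Q * γ) ^ ((α - p + 1) / α) * B) := by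
    calc c / τ * (m ^ (p - 1) * (ξ * f)) = c / τ * (ξ * (m ^ (p - 1) * f)) := by ring
      _ ≤ c / τ * (ξ * (Q * γ / (1 + ξ * ((Q * γ) ^ ((α - p + 1) / α) * B)))) := by gcongr
      _ ≤ Q * γ * l / (1 + l * ((Q * γ) ^ ((α - p + 1) / α) * B)) :=
          div_mul_div_one_add_le hτ (by positivity) (by positivity) hξ hc hcl hlτ
      _ = Q * γ * l / (1 + l * (Q * γ) ^ ((α - p + 1) / α) * B) := by rw [mul_assoc l]
  calc (c / τ) ^ (1 / (p - 1)) * m * (ξ * f) ^ (1 / (p - 1))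
      = (c / τ * (m ^ (p - 1) * (ξ * f))) ^ (1 / (p - 1)) := by
        rw [Real.mul_rpow (x := c / τ) (by positivity) (by positivity),
          Real.mul_rpow (x := m ^ (p - 1)) (by positivity) (by positivity), one_div,
          Real.rpow_rpow_inv hm hp₁.ne', mul_assoc]
    _ ≤ _ := by gcongr

lemma bounds_of_mem_Ioc {r s ξ : ℝ} (hτ : 1 < τ) (hr : 0 < r) (hrs : τ ^ (1 / 4 : ℝ) * r ≤ s)
    (hsr : s ≤ τ ^ (1 / 2 : ℝ) * r) (hξ : ξ ∈ Ioc r s) :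
    (τ ^ (1 / 4 : ℝ) - 1) / τ * ξ ≤ s - r ∧ ξ / τ ≤ r ∧ s ≤ τ * ξ := by
  have hτ₂ : τ ^ (1 / 2 : ℝ) ≤ τ := Real.rpow_le_self_of_one_le hτ.le (by norm_num)
  have hτ₄ : 1 ≤ τ ^ (1 / 4 : ℝ) := Real.one_le_rpow hτ.le (by norm_num)
  have hsτ : s ≤ τ * r := hsr.trans (by gcongr)
  have hξr : ξ / τ ≤ r := (div_le_iff₀' (by positivity)).2 (hξ.2.trans hsτ)
  refine ⟨?_, hξr, hsτ.trans (by gcongr; exact hξ.1.le)⟩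
  calc (τ ^ (1 / 4 : ℝ) - 1) / τ * ξ = (τ ^ (1 / 4 : ℝ) - 1) * (ξ / τ) := by ring
    _ ≤ (τ ^ (1 / 4 : ℝ) - 1) * r := mul_le_mul_of_nonneg_left hξr (sub_nonneg.2 hτ₄)
    _ ≤ s - r := by linarith

lemma IsDriftSubsolution.ae_rpow_le_essSup_and_qinf_mul_le
    (h : IsDriftSubsolution p C₁ C₂ α V b f u) (hα : 0 < α) (hp : 1 ≤ p) (hq : ∀ x, 0 ≤ q x)
    {γ k r s ρ σ : ℝ} (hγ : 0 ≤ γ) (hr : ρ / σ ≤ r) (hs : s ≤ σ * ρ)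
    (hf : ∀ x, ‖x‖ ≤ s → k < u x → q x * γ ≤ f x) :
    ∀ᵐ x, x ∈ Ann n r s →
      b x ^ ((p - 1) / α) ≤
          essSup (fun x ↦ b x ^ ((p - 1) / α)) (volume.restrict (Ann n (ρ / σ) (σ * ρ))) ∧
        (k < u x → qinf q σ ρ * γ ≤ f x) := by
  filter_upwards [ae_qinf_le hq σ ρ, ae_rpow_le_essSup_ann h.drift_nonneg h.drift_locBdd
    (div_nonneg (sub_nonneg.2 hp) hα.le) (ρ / σ) (σ * ρ)] with x hqx hbx hx
  have hxρ := ann_subset_ann hr hs hx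
  exact ⟨hbx hxρ, fun hkx ↦
    (mul_le_mul_of_nonneg_right (hqx hxρ) hγ).trans (hf x hx.2.le hkx)⟩

theorem IsDriftSubsolution.exists_mul_fdef_rpow_le_sphMax_sub (hn : 2 ≤ n) (hp : 1 < p)
    (hC₁ : 0 < C₁) (hC₂ : 0 < C₂) (hpα : p - 1 ≤ α) (hαp : α ≤ p) (hτ : 1 < τ) :
    ∃ C > 0, ∀ {V : Euc n → Euc n} {b f u q : Euc n → ℝ} {γ k r s : ℝ},
      IsDriftSubsolution p C₁ C₂ α V b f u → (∀ x, 0 ≤ q x) → 0 < γ → 0 < r →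
      τ ^ (1 / 4 : ℝ) * r ≤ s → s ≤ τ ^ (1 / 2 : ℝ) * r →
      (∀ x, ‖x‖ ≤ s → k < u x → q x * γ ≤ f x) → k < sphMax u r → ∀ ξ ∈ Ioc r s,
      C * min (γ ^ (1 / α)) (γ ^ (1 / (p - 1))) * (ξ * fdef q b p α τ ξ) ^ (1 / (p - 1)) *
        (s - r) ≤ sphMax u s - sphMax u r := by
  obtain ⟨ε, hε, hgrowth⟩ := exists_mul_rpow_le_sphMax_sub hn hp hC₁ hC₂ hpα hαp
  have hα : 0 < α := by linarith
  have : 0 < p - 1 := sub_pos.2 hp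
  set c := (τ ^ (1 / 4 : ℝ) - 1) / τ
  have hc₀ : 0 < c :=
    div_pos (sub_pos.2 (Real.one_lt_rpow hτ (by norm_num))) (by positivity)
  refine ⟨ε * (c / τ) ^ (1 / (p - 1)), by positivity,
    fun {V b f u q γ k r s} h hq hγ hr hrs hsr hf hk ξ hξ ↦ ?_⟩
  obtain ⟨hcξ, hξr, hsξ⟩ := bounds_of_mem_Ioc hτ hr hrs hsr hξ
  have hlt : r < s := hξ.1.trans_le hξ.2
  set Q := qinf q τ ξ with hQ
  set B := essSup (fun x ↦ b x ^ ((p - 1) / α)) (volume.restrict (Ann n (ξ / τ) (τ * ξ)))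
  have hB₀ : 0 ≤ B := essSup_nonneg_of_forall fun x ↦ Real.rpow_nonneg (h.drift_nonneg x) _
  have hQ₀ : 0 ≤ Q := essInf_nonneg_of_forall hq
  rcases hQ₀.eq_or_lt with hQ₀ | hQ₀
  · have hfdef : fdef q b p α τ ξ = 0 := by rw [fdef, ← hQ, ← hQ₀, zero_div]
    rw [hfdef, mul_zero, Real.zero_rpow (by positivity), mul_zero, zero_mul, sub_nonneg]
    exact h.sphMax_le_sphMax hn hp hC₁ hpα hr hlt.le
  have hfdef := mul_rpow_mul_div_one_add_le hp hα hτ.le hγ (by positivity)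
    (min_le_left (γ ^ (1 / α)) (γ ^ (1 / (p - 1)))) (min_le_right _ _) hQ₀.le hB₀
    (hr.trans hξ.1) hc₀ hcξ (by linarith)
  have hle := hgrowth (a := Q * γ) h (by positivity) hB₀ hr (sub_pos.2 hlt) (by
    rw [add_sub_cancel]
    exact h.ae_rpow_le_essSup_and_qinf_mul_le hα hp.le hq hγ.le hξr hsξ hf) hk
  rw [add_sub_cancel] at hle
  refine le_trans ?_ hle
  calc _ = ε * (s - r) * ((c / τ) ^ (1 / (p - 1)) * min (γ ^ (1 / α)) (γ ^ (1 / (p - 1))) *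
        (ξ * fdef q b p α τ ξ) ^ (1 / (p - 1))) := by ring
    _ ≤ _ := mul_le_mul_of_nonneg_left hfdef (by positivity)

end AnnularData

section IntegratedGrowth

lemma integral_Ioc_le_sub_of_forall_mul_sub_le {F Φ : ℝ → ℝ} {a : ℕ → ℝ} (ha : Monotone a) {N : ℕ}
    (hF : IntegrableOn F (Ioc (a 0) (a N)))
    (hstep : ∀ i < N, ∀ ξ ∈ Ioc (a i) (a (i + 1)),
      F ξ * (a (i + 1) - a i) ≤ Φ (a (i + 1)) - Φ (a i)) :
    ∫ ξ in Ioc (a 0) (a N), F ξ ≤ Φ (a N) - Φ (a 0) := by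
  have hadd (i : ℕ) : a i ≤ a (i + 1) := ha i.le_succ
  have hint (i : ℕ) (hi : i < N) : IntegrableOn F (Ioc (a i) (a (i + 1))) :=
    hF.mono_set (Ioc_subset_Ioc (ha i.zero_le) (ha hi))
  rw [← intervalIntegral.integral_of_le (ha N.zero_le),
    ← intervalIntegral.sum_integral_adjacent_intervals fun i hi ↦
      (intervalIntegrable_iff_integrableOn_Ioc_of_le (hadd i)).2 (hint i hi),
    ← Finset.sum_range_sub fun i ↦ Φ (a i)]
  refine Finset.sum_le_sum fun i hi ↦ ?_
  rw [Finset.mem_range] at hi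
  rw [intervalIntegral.integral_of_le (hadd i)]
  rcases (hadd i).eq_or_lt with heq | hlt
  · simp [← heq]
  calc ∫ ξ in Ioc (a i) (a (i + 1)), F ξ
      ≤ ∫ _ in Ioc (a i) (a (i + 1)), (Φ (a (i + 1)) - Φ (a i)) / (a (i + 1) - a i) :=
        setIntegral_mono_on (hint i hi) (integrableOn_const measure_Ioc_lt_top.ne)
          measurableSet_Ioc fun ξ hξ ↦ (le_div_iff₀ (sub_pos.2 hlt)).2 (hstep i hi ξ hξ)
    _ = Φ (a (i + 1)) - Φ (a i) := by
        rw [setIntegral_const, smul_eq_mul, Real.volume_real_Ioc_of_le (hadd i),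
          mul_div_cancel₀ _ (sub_pos.2 hlt).ne']

lemma exists_mul_pow_eq {τ r₁ r₂ : ℝ} (hτ : 1 < τ) (hr₁ : 0 < r₁)
    (hr : τ ^ (1 / 2 : ℝ) * r₁ ≤ r₂) :
    ∃ (l : ℝ) (N : ℕ), τ ^ (1 / 4 : ℝ) ≤ l ∧ l ≤ τ ^ (1 / 2 : ℝ) ∧ r₁ * l ^ N = r₂ := by
  have hratio : τ ^ (1 / 2 : ℝ) ≤ r₂ / r₁ := (le_div_iff₀ hr₁).2 hr
  set L := Real.logb τ (r₂ / r₁)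
  have hτL : τ ^ L = r₂ / r₁ :=
    Real.rpow_logb (by positivity) hτ.ne' ((by positivity : 0 < τ ^ (1 / 2 : ℝ)).trans_le hratio)
  have hL : 1 / 2 ≤ L := (Real.rpow_le_rpow_left_iff hτ).1 (hratio.trans_eq hτL.symm)
  obtain ⟨N, -, hLN, hNL⟩ := exists_nat_le_and_le_one_add (by positivity : 0 ≤ 2 * L)
  have hN : 0 < (N : ℝ) := by linarith
  refine ⟨τ ^ (L / N), N, ?_, ?_, ?_⟩
  · refine Real.rpow_le_rpow_of_exponent_le hτ.le ((le_div_iff₀ hN).2 ?_)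
    linarith
  · refine Real.rpow_le_rpow_of_exponent_le hτ.le ((div_le_iff₀ hN).2 ?_)
    linarith
  · rw [← Real.rpow_mul_natCast (by positivity), div_mul_cancel₀ _ hN.ne', hτL,
      mul_div_cancel₀ _ hr₁.ne']

variable {n : ℕ} {p C₁ C₂ α τ : ℝ}

theorem IsDriftSubsolution.exists_mul_integral_le_sphMax_sub (hn : 2 ≤ n) (hp : 1 < p)
    (hC₁ : 0 < C₁) (hC₂ : 0 < C₂) (hpα : p - 1 ≤ α) (hαp : α ≤ p) (hτ : 1 < τ) :
    ∃ C > 0, ∀ {V : Euc n → Euc n} {b f u q : Euc n → ℝ} {γ k r₁ r₂ : ℝ},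
      IsDriftSubsolution p C₁ C₂ α V b f u → (∀ x, 0 ≤ q x) → 0 < γ → 0 < r₁ →
      τ ^ (1 / 2 : ℝ) * r₁ ≤ r₂ → (∀ x, ‖x‖ ≤ r₂ → k < u x → q x * γ ≤ f x) →
      k < sphMax u r₁ →
      C * min (γ ^ (1 / α)) (γ ^ (1 / (p - 1))) *
        ∫ ξ in Ioc r₁ r₂, (ξ * fdef q b p α τ ξ) ^ (1 / (p - 1)) ≤
          sphMax u r₂ - sphMax u r₁ := by
  obtain ⟨C, hC, hannulus⟩ :=
    exists_mul_fdef_rpow_le_sphMax_sub hn hp hC₁ hC₂ hpα hαp hτ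
  refine ⟨C, hC, fun {V b f u q γ k r₁ r₂} h hq hγ hr₁ hr hf hk ↦ ?_⟩
  obtain ⟨l, N, hτl, hlτ, rfl⟩ := exists_mul_pow_eq hτ hr₁ hr
  have hl : 1 ≤ l := (Real.one_le_rpow hτ.le (by norm_num)).trans hτl
  have hmono : Monotone fun i : ℕ ↦ r₁ * l ^ i := fun i j hij ↦ by dsimp only; gcongr
  by_cases hint : IntegrableOn (fun ξ ↦ (ξ * fdef q b p α τ ξ) ^ (1 / (p - 1)))
      (Ioc r₁ (r₁ * l ^ N))
  swap
  · rw [integral_undef hint, mul_zero, sub_nonneg]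
    exact h.sphMax_le_sphMax hn hp hC₁ hpα hr₁ (by simpa using hmono N.zero_le)
  rw [← integral_const_mul]
  have hsum := integral_Ioc_le_sub_of_forall_mul_sub_le (Φ := sphMax u) (N := N) hmono
    (by simpa only [pow_zero, mul_one, IntegrableOn] using
      hint.const_mul (C * min (γ ^ (1 / α)) (γ ^ (1 / (p - 1))))) fun i hi ↦
      hannulus h hq hγ (r := r₁ * l ^ i) (by positivity) ?_ ?_
      (fun x hx ↦ hf x (hx.trans (hmono hi)))
      (hk.trans_le (h.sphMax_le_sphMax hn hp hC₁ hpα hr₁ (by simpa using hmono i.zero_le)))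
  · simpa using hsum
  · rw [pow_succ', mul_left_comm]
    gcongr
  · rw [pow_succ', mul_left_comm]
    gcongr

end IntegratedGrowth

section LocalInfimum

variable {g : ℝ → ℝ} {η t : ℝ}

lemma ginf_le (hg : ∀ s, 0 < s → 0 < g s) (hη : 0 < η) (ht : 0 < t) {s : ℝ}
    (hs : s ∈ Ioo (t / η) (η * t)) : ginf g η t ≤ g s :=
  csInf_le ⟨0, forall_mem_image.2 fun _ hx ↦ (hg _ ((div_pos ht hη).trans hx.1)).le⟩
    (mem_image_of_mem g hs)

lemma le_ginf (hη : 1 < η) (ht : 0 < t) {c : ℝ} (hc : ∀ s ∈ Ioo (t / η) (η * t), c ≤ g s) :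
    c ≤ ginf g η t :=
  le_csInf ⟨g t, mem_image_of_mem g ⟨div_lt_self ht hη, lt_mul_of_one_lt_left ht hη⟩⟩
    (forall_mem_image.2 hc)

lemma aemeasurable_ginf (hg : ∀ s, 0 < s → 0 < g s) (hη : 1 < η) :
    AEMeasurable (ginf g η) (volume.restrict (Ioi 0)) := by
  refine aemeasurable_restrict_of_measurable_subtype measurableSet_Ioi
    (measurable_of_Iio fun c ↦ IsOpen.measurableSet ?_)
  have hpre : (fun t : Ioi (0 : ℝ) ↦ ginf g η t) ⁻¹' Iio c =
      Subtype.val ⁻¹' ⋃ s ∈ g ⁻¹' Iio c, {t : ℝ | t / η < s ∧ s < η * t} := by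
    ext ⟨t, ht⟩
    simp only [mem_preimage, mem_Iio, mem_iUnion, exists_prop]
    constructor
    · contrapose!
      exact fun hle ↦ le_ginf hη ht fun s hs ↦ not_lt.1 fun hlt ↦ hle s hlt hs
    · rintro ⟨s, hsc, hs⟩
      exact (ginf_le hg (one_pos.trans hη) ht hs).trans_lt hsc
  rw [hpre]
  refine (isOpen_biUnion fun s _ ↦ ?_).preimage continuous_subtype_val
  exact (isOpen_lt (continuous_id.div_const η) continuous_const).inter
    (isOpen_lt continuous_const (continuous_const_mul η))

lemma exists_pos_forall_le_of_continuousOn_Ici (hgc : ContinuousOn g (Ici 0))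
    (hg : ∀ t, 0 < t → 0 < g t) {a b : ℝ} (ha : 0 < a) (hab : a ≤ b) :
    ∃ t₀ ∈ Icc a b, 0 < g t₀ ∧ ∀ t ∈ Icc a b, g t₀ ≤ g t := by
  obtain ⟨t₀, ht₀, hmin⟩ := isCompact_Icc.exists_isMinOn (nonempty_Icc.2 hab)
    (hgc.mono fun t ht ↦ ha.le.trans ht.1)
  exact ⟨t₀, ht₀, hg t₀ (ha.trans_le ht₀.1), fun t ht ↦ hmin ht⟩

lemma exists_pos_forall_le_ginf (hgc : ContinuousOn g (Ici 0)) (hg : ∀ t, 0 < t → 0 < g t)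
    (hη : 1 < η) {M₁ M₂ : ℝ} (hM : 0 < M₁) :
    ∃ c > 0, ∀ t ∈ Ioc M₁ M₂, c ≤ ginf g η t := by
  rcases lt_or_ge M₂ M₁ with hlt | hle
  · exact ⟨1, one_pos, by simp [Ioc_eq_empty_of_le hlt.le]⟩
  have hη₀ : 0 < η := one_pos.trans hη
  obtain ⟨t₀, -, hpos, hmin⟩ := exists_pos_forall_le_of_continuousOn_Ici hgc hg
    (div_pos hM hη₀) (b := η * M₂) ((div_le_self hM.le hη.le).trans
      (hle.trans (le_mul_of_one_le_left (hM.le.trans hle) hη.le)))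
  refine ⟨g t₀, hpos, fun t ht ↦ le_ginf hη (hM.trans ht.1) fun s hs ↦ hmin s ⟨?_, ?_⟩⟩
  · exact (div_le_div_of_nonneg_right ht.1.le hη₀.le).trans hs.1.le
  · exact hs.2.le.trans (mul_le_mul_of_nonneg_left ht.2 hη₀.le)

lemma integrableOn_ginf_rpow_neg (hgc : ContinuousOn g (Ici 0))
    (hg : ∀ t, 0 < t → 0 < g t) (hη : 1 < η) {M₁ M₂ e : ℝ} (hM : 0 < M₁) (he : 0 ≤ e) :
    IntegrableOn (fun t ↦ ginf g η t ^ (-e)) (Ioc M₁ M₂) := by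
  obtain ⟨c, hc, hcg⟩ := exists_pos_forall_le_ginf hgc hg hη (M₂ := M₂) hM
  have hmeas : AEMeasurable (ginf g η) (volume.restrict (Ioc M₁ M₂)) :=
    (aemeasurable_ginf hg hη).mono_set fun t ht ↦ hM.trans ht.1
  refine .of_bound measure_Ioc_lt_top (hmeas.pow_const _).aestronglyMeasurable (c ^ (-e))
    (ae_restrict_of_forall_mem measurableSet_Ioc fun t ht ↦ ?_)
  rw [Real.norm_of_nonneg (Real.rpow_nonneg (hc.le.trans (hcg t ht)) _)]
  exact Real.rpow_le_rpow_of_nonpos hc (hcg t ht) (neg_nonpos.2 he)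

lemma sub_mul_rpow_neg_le_integral_ginf (hgc : ContinuousOn g (Ici 0))
    (hg : ∀ t, 0 < t → 0 < g t) (hη : 1 < η) {M₁ M₂ γ e : ℝ}
    (hM : 0 < M₁) (hMM : M₁ ≤ M₂) (he : 0 ≤ e) (hγ : ∀ t ∈ Ioc M₁ M₂, ginf g η t ≤ γ) :
    (M₂ - M₁) * γ ^ (-e) ≤ ∫ t in Ioc M₁ M₂, ginf g η t ^ (-e) := by
  obtain ⟨c, hc, hcg⟩ := exists_pos_forall_le_ginf hgc hg hη (M₂ := M₂) hM
  calc (M₂ - M₁) * γ ^ (-e) = ∫ _ in Ioc M₁ M₂, γ ^ (-e) := by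
        rw [setIntegral_const, smul_eq_mul, Real.volume_real_Ioc_of_le hMM]
    _ ≤ ∫ t in Ioc M₁ M₂, ginf g η t ^ (-e) :=
        setIntegral_mono_on (integrableOn_const measure_Ioc_lt_top.ne)
          (integrableOn_ginf_rpow_neg hgc hg hη hM he) measurableSet_Ioc fun t ht ↦
            Real.rpow_le_rpow_of_nonpos (hc.trans_le (hcg t ht)) (hγ t ht) (neg_nonpos.2 he)

lemma exists_level_and_weight (hgc : ContinuousOn g (Ici 0))
    (hg : ∀ t, 0 < t → 0 < g t) (hη : 1 < η) {M₁ M₂ : ℝ} (hM : 0 < M₁) (hMM : M₁ ≤ M₂)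
    (hM₂ : M₂ < η * M₁) :
    ∃ k < M₁, ∃ γ > 0, (∀ t ∈ Ioc k M₂, γ ≤ g t) ∧ ∀ t ∈ Ioc M₁ M₂, ginf g η t ≤ γ := by
  have hη₀ : 0 < η := one_pos.trans hη
  obtain ⟨k, hkM₂, hkM₁⟩ := exists_between ((div_lt_iff₀' hη₀).2 hM₂)
  have hk : 0 < k := (div_pos (hM.trans_le hMM) hη₀).trans hkM₂
  obtain ⟨t₀, ht₀, hpos, hmin⟩ :=
    exists_pos_forall_le_of_continuousOn_Ici hgc hg hk (hkM₁.le.trans hMM)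
  refine ⟨k, hkM₁, g t₀, hpos, fun t ht ↦ hmin t (Ioc_subset_Icc_self ht), fun t ht ↦
    ginf_le hg hη₀ (hM.trans ht.1) ⟨?_, ?_⟩⟩
  · calc t / η ≤ M₂ / η := div_le_div_of_nonneg_right ht.2 hη₀.le
      _ < k := hkM₂
      _ ≤ t₀ := ht₀.1
  · calc t₀ ≤ M₂ := ht₀.2
      _ < η * M₁ := hM₂
      _ < η * t := mul_lt_mul_of_pos_left ht.1 hη₀

end LocalInfimum

section WeakSolution

variable {n : ℕ} {A : Euc n → Euc n → Euc n} {p C₁ C₂ α : ℝ} {b f q u : Euc n → ℝ} {g : ℝ → ℝ}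

lemma norm_gradient (u : Euc n → ℝ) (x : Euc n) : ‖gradient u x‖ = ‖fderiv ℝ u x‖ := by
  simp [gradient]

lemma inner_gradient (u : Euc n → ℝ) (x v : Euc n) : ⟪v, gradient u x⟫ = fderiv ℝ u x v := by
  rw [real_inner_comm, gradient, InnerProductSpace.toDual_symm_apply]

lemma continuous_gradient (hu : ContDiff ℝ 1 u) : Continuous (gradient u) :=
  (InnerProductSpace.toDual ℝ (Euc n)).symm.continuous.comp (hu.continuous_fderiv one_ne_zero)

lemma LocBdd.locallyIntegrable_mul {w : Euc n → ℝ} (hb : LocBdd b) (hbm : Measurable b)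
    (hb₀ : ∀ x, 0 ≤ b x) (hw : Continuous w) : LocallyIntegrable fun x ↦ b x * w x := by
  refine locallyIntegrable_of_bddOn_compact
    (hbm.mul hw.measurable).aestronglyMeasurable fun K hK ↦ ?_
  obtain ⟨β, hβ⟩ := hb K hK
  obtain ⟨c, hc⟩ := hK.exists_bound_of_continuousOn hw.continuousOn
  refine ⟨|β| * c, fun x hx ↦ ?_⟩
  rw [norm_mul, Real.norm_of_nonneg (hb₀ x)]
  exact mul_le_mul ((hβ x hx).trans (le_abs_self β)) (hc x hx) (norm_nonneg _) (abs_nonneg β)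

lemma StructCond.norm_flux_le (hA : StructCond A p C₁ C₂) (x : Euc n) :
    ‖A x (gradient u x)‖ ≤ C₂ * ‖fderiv ℝ u x‖ ^ (p - 1) :=
  norm_gradient u x ▸ (hA.2 x _).2

lemma StructCond.locallyIntegrable_flux (hA : StructCond A p C₁ C₂) (hp : 1 ≤ p)
    (hu : ContDiff ℝ 1 u) : LocallyIntegrable fun x ↦ A x (gradient u x) := by
  refine locallyIntegrable_of_bddOn_compact (hA.1.comp
    (measurable_id.prodMk (continuous_gradient hu).measurable)).aestronglyMeasurable fun K hK ↦ ?_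
  obtain ⟨c, hc⟩ := hK.exists_bound_of_continuousOn (f := fun x ↦ C₂ * ‖fderiv ℝ u x‖ ^ (p - 1))
    (((hu.continuous_fderiv one_ne_zero).norm.rpow_const
      fun _ ↦ Or.inr (sub_nonneg.2 hp)).const_mul C₂).continuousOn
  exact ⟨c, fun x hx ↦ (hA.norm_flux_le x).trans ((le_abs_self _).trans (hc x hx))⟩

lemma IsWeakSol.divAddNonneg (h : IsWeakSol A b α f univ u)
    (hV : LocallyIntegrable fun x ↦ A x (gradient u x))
    (hb : LocallyIntegrable fun x ↦ b x * ‖fderiv ℝ u x‖ ^ α) (hf : LocallyIntegrable f) :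
    DivAddNonneg volume (fun x ↦ A x (gradient u x)) fun x ↦ b x * ‖fderiv ℝ u x‖ ^ α - f x := by
  intro φ hφ hφc hφ₀
  have hweak := h φ hφ hφc (subset_univ _) hφ₀
  simp only [Measure.restrict_univ, norm_gradient, inner_gradient] at hweak
  have hbφ : Integrable fun x ↦ b x * ‖fderiv ℝ u x‖ ^ α * φ x :=
    hb.integrable_smul_right_of_hasCompactSupport hφ.continuous hφc
  have hfφ : Integrable fun x ↦ f x * φ x :=
    hf.integrable_smul_right_of_hasCompactSupport hφ.continuous hφc
  have hlowerφ : Integrable fun x ↦ (b x * ‖fderiv ℝ u x‖ ^ α - f x) * φ x :=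
    (hb.sub hf).integrable_smul_right_of_hasCompactSupport hφ.continuous hφc
  have hVφ : Integrable fun x ↦ fderiv ℝ φ x (A x (gradient u x)) :=
    integrable_clm_apply_of_hasCompactSupport hV
      (hφ.continuous_fderiv (by norm_num)) (hφc.fderiv ℝ)
  rw [integral_sub hlowerφ hVφ]
  simp only [sub_mul]
  rw [integral_sub hbφ hfφ]
  linarith

theorem IsWeakSol.isDriftSubsolution (h : IsWeakSol A b α (fun x ↦ q x * g (u x)) univ u)
    (hA : StructCond A p C₁ C₂) (hp : 1 ≤ p) (hα : 0 ≤ α) (hbm : Measurable b)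
    (hb₀ : ∀ x, 0 ≤ b x) (hb : LocBdd b) (hqm : Measurable q) (hq₀ : ∀ x, 0 ≤ q x) (hq : LocBdd q)
    (hg : ContinuousOn g (Ici 0)) (hg₀ : ∀ t ∈ Ici (0 : ℝ), 0 ≤ g t) (hu : ContDiff ℝ 1 u)
    (hu₀ : ∀ x, 0 ≤ u x) :
    IsDriftSubsolution p C₁ C₂ α (fun x ↦ A x (gradient u x)) b (fun x ↦ q x * g (u x)) u := by
  have hV := hA.locallyIntegrable_flux hp hu
  have hdrift := hb.locallyIntegrable_mul hbm hb₀
    ((hu.continuous_fderiv one_ne_zero).norm.rpow_const fun _ ↦ Or.inr hα)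
  have hsource := hq.locallyIntegrable_mul hqm hq₀ (hg.comp_continuous hu.continuous hu₀)
  exact
  { contDiff := hu
    coercive := fun x ↦ by
      rw [← norm_gradient, ← inner_gradient, real_inner_comm]
      exact (hA.2 x _).1
    growth := hA.norm_flux_le
    locallyIntegrable_flux := hV
    locallyIntegrable_lower := hdrift.sub hsource
    divAddNonneg := h.divAddNonneg hV hdrift hsource
    drift_nonneg := hb₀
    drift_locBdd := hb
    source_nonneg := fun x ↦ mul_nonneg (hq₀ x) (hg₀ _ (hu₀ x)) }

end WeakSolution

section Dichotomy

variable {n : ℕ} {p C₁ C₂ α τ : ℝ}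

theorem stmt_7_general (hn : 2 ≤ n) (hp : 1 < p) (hC₁ : 0 < C₁) (hC₂ : 0 < C₂) (hpα : p - 1 ≤ α)
    (hαp : α ≤ p) (hτ : 1 < τ) :
    ∃ C > 0, ∀ {V : Euc n → Euc n} {b q u : Euc n → ℝ} {g : ℝ → ℝ} {η r₁ r₂ : ℝ},
      IsDriftSubsolution p C₁ C₂ α V b (fun x ↦ q x * g (u x)) u → (∀ x, 0 ≤ q x) →
      ContinuousOn g (Ici 0) → (∀ t, 0 < t → 0 < g t) → 1 < η →
      0 < r₁ → τ ^ (1 / 2 : ℝ) * r₁ ≤ r₂ → sphMax u r₂ < η * sphMax u r₁ →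
      (C * ∫ ξ in Ioc r₁ r₂, (ξ * fdef q b p α τ ξ) ^ (1 / (p - 1))) ≤
          ∫ t in Ioc (sphMax u r₁) (sphMax u r₂), ginf g η t ^ (-(1 / α)) ∨
        (C * ∫ ξ in Ioc r₁ r₂, (ξ * fdef q b p α τ ξ) ^ (1 / (p - 1))) ≤
          ∫ t in Ioc (sphMax u r₁) (sphMax u r₂), ginf g η t ^ (-(1 / (p - 1))) := by
  obtain ⟨C, hC, hgrowth⟩ :=
    IsDriftSubsolution.exists_mul_integral_le_sphMax_sub hn hp hC₁ hC₂ hpα hαp hτ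
  refine ⟨C, hC, fun {V b q u g η r₁ r₂} h hq hgc hg hη hr₁ hr hM₂ ↦ ?_⟩
  have hr₁₂ : r₁ ≤ r₂ :=
    (le_mul_of_one_le_left hr₁.le (Real.one_le_rpow hτ.le (by norm_num))).trans hr
  have hM := h.sphMax_le_sphMax hn hp hC₁ hpα hr₁ hr₁₂
  have hM₁ : 0 < sphMax u r₁ := by nlinarith
  obtain ⟨k, hk, γ, hγ, hγg, hgγ⟩ := exists_level_and_weight hgc hg hη hM₁ hM hM₂
  have hmain := hgrowth h hq hγ hr₁ hr (fun x hx hkx ↦ mul_le_mul_of_nonneg_left (hγg _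
    ⟨hkx, h.le_sphMax_of_norm_le hn hp hC₁ hpα (hr₁.trans_le hr₁₂) hx⟩) (hq x)) hk
  have hconclude (ν : ℝ) (hν : 0 ≤ ν) (hmin : min (γ ^ (1 / α)) (γ ^ (1 / (p - 1))) = γ ^ ν) :
      C * ∫ ξ in Ioc r₁ r₂, (ξ * fdef q b p α τ ξ) ^ (1 / (p - 1)) ≤
        ∫ t in Ioc (sphMax u r₁) (sphMax u r₂), ginf g η t ^ (-ν) := by
    refine le_trans ?_ (sub_mul_rpow_neg_le_integral_ginf hgc hg hη hM₁ hM hν hgγ)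
    rw [hmin] at hmain
    rw [Real.rpow_neg hγ.le, ← div_eq_mul_inv, le_div_iff₀ (by positivity)]
    linarith
  exact (min_choice (γ ^ (1 / α)) (γ ^ (1 / (p - 1)))).imp
    (hconclude _ (one_div_nonneg.2 (by linarith))) (hconclude _ (one_div_nonneg.2 (by linarith)))

end Dichotomy

/-- Lemma 3.4: dichotomy estimate on annuli `τ^{1/2} r₁ ≤ r₂` when `M` grows at most by the
factor `η^{1/2}`. -/
theorem stmt_7 (n : ℕ) (hn : 2 ≤ n) (p C₁ C₂ α : ℝ) (hp : 1 < p)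
    (hC₁ : 0 < C₁) (hC₂ : 0 < C₂) (hα₁ : p - 1 ≤ α) (hα₂ : α ≤ p)
    (η τ : ℝ) (hη : 1 < η) (hτ : 1 < τ) :
    ∃ C : ℝ, 0 < C ∧
      ∀ (A : Euc n → Euc n → Euc n), StructCond A p C₁ C₂ →
      ∀ (b : Euc n → ℝ), Measurable b → (∀ x, 0 ≤ b x) → LocBdd b →
      ∀ (q : Euc n → ℝ), Measurable q → (∀ x, 0 ≤ q x) → LocBdd q →
      ∀ (g : ℝ → ℝ), ContinuousOn g (Set.Ici 0) → (∀ t ∈ Set.Ici (0 : ℝ), 0 ≤ g t) →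
        (∀ t : ℝ, 0 < t → 0 < g t) →
      ∀ u : Euc n → ℝ, ContDiff ℝ 1 u → (∀ x, 0 ≤ u x) →
        IsWeakSol A b α (fun x => q x * g (u x)) Set.univ u →
      ∀ r₁ r₂ : ℝ, 0 < r₁ → r₁ < r₂ → τ ^ (1 / 2 : ℝ) * r₁ ≤ r₂ →
        0 < sphMax u r₂ → sphMax u r₂ ≤ η ^ (1 / 2 : ℝ) * sphMax u r₁ →
        (C * ∫ ξ in Set.Ioc r₁ r₂, (ξ * fdef q b p α τ ξ) ^ (1 / (p - 1))) ≤
            ∫ t in Set.Ioc (sphMax u r₁) (sphMax u r₂), ginf g η t ^ (-(1 / α)) ∨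
          (C * ∫ ξ in Set.Ioc r₁ r₂, (ξ * fdef q b p α τ ξ) ^ (1 / (p - 1))) ≤
            ∫ t in Set.Ioc (sphMax u r₁) (sphMax u r₂), ginf g η t ^ (-(1 / (p - 1))) := by
  obtain ⟨C, hC, hmain⟩ := stmt_7_general hn hp hC₁ hC₂ hα₁ hα₂ hτ
  refine ⟨C, hC, fun A hA b hbm hb₀ hb q hqm hq₀ hq g hgc hg₀ hg u hu hu₀ hsol r₁ r₂ hr₁ _ hr
    hM₂ hMη ↦ hmain (hsol.isDriftSubsolution hA hp.le (by linarith) hbm hb₀ hb hqm hq₀ hq hgc hg₀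
      hu hu₀) hq₀ hgc hg hη hr₁ hr (hMη.trans_lt ?_)⟩
  have hM₁ : 0 < sphMax u r₁ := pos_of_mul_pos_right (hM₂.trans_le hMη) (by positivity)
  gcongr
  exact Real.rpow_lt_self_of_one_lt hη (by norm_num)
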